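/- Let N ≥ 2 and J ≥ 1 be integers. For each 1 ≤ i ≤ J let k_i ≥ 1 be an integer and let P_{i1}, …, P_{ik_i} ∈ ℚ[X_1, …, X_N] be polynomials of respective degrees m_{i1}, …, m_{ik_i} ≥ 1; let Z(P_{i1}, …, P_{ik_i}) = {x ∈ ℚ^N : P_{i1}(x) = ⋯ = P_{ik_i}(x) = 0}, let 𝒵 = ∪_{i=1}^J Z(P_{i1}, …, P_{ik_i}), let M_i = max_{1 ≤ j ≤ k_i} m_{ij}, and M = Σ_{i=1}^J M_i. Let V ⊆ ℚ^N be an L-dimensional subspace (1 ≤ L ≤ N), let F be a quadratic form in N variables over ℚ, let ω be the Witt index of (V, F), λ = dim V^⊥, and m = ω + λ. Let Z(V,F) = {z ∈ V \ {0} : F(z) = 0} and suppose Z(V,F) is not contained in 𝒵. Then there exists a constant C depending only on L and M and m linearly independent vectors x_1, …, x_m ∈ Z(V,F) \ 𝒵 with h(x_1) ≤ h(x_2) ≤ ⋯ ≤ h(x_m) and h(x_n) ≤ C · H(F)^{(9L+11)/2} · H(V)^{9L+12} for each 1 ≤ n ≤ m. -/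

import Mathlib

/-- Projective (homogeneous) height of a rational vector: the sup-norm of a primitive integer
vector proportional to it. -/
noncomputable def projHeight {ι : Type*} [Fintype ι] (x : ι → ℚ) : ℕ :=
  sInf {m : ℕ | ∃ y : ι → ℤ,
    (∃ c : ℚ, c ≠ 0 ∧ ∀ i, (y i : ℚ) = c * x i) ∧
    Finset.univ.gcd y = 1 ∧ m = Finset.univ.sup fun i => (y i).natAbs}

/-- Height of an `L`-dimensional subspace `V ⊆ ℚ^N`: the Euclidean norm of the vector of all
`L×L` minors of an `L×N` matrix whose rows form a ℤ-basis of `V ∩ ℤ^N` (computed via the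
Cauchy–Binet formula as `√det(B Bᵀ)`). -/
noncomputable def subHeight (N L : ℕ) (V : Submodule ℚ (Fin N → ℚ)) : ℝ :=
  sInf {r : ℝ | ∃ B : Matrix (Fin L) (Fin N) ℤ,
    (∀ z : Fin N → ℤ, ((fun i => (z i : ℚ)) ∈ V) ↔
      ∃ c : Fin L → ℤ, ∀ j, z j = ∑ i, c i * B i j) ∧
    r = Real.sqrt ((B * B.transpose).det : ℝ)}

/-- The radical `V^⊥ = {x ∈ V : F(x,y) = 0 ∀ y ∈ V}` of the quadratic space `(V, F)`. -/
noncomputable def quadRadical (N : ℕ) (f : Fin N → Fin N → ℚ)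
    (V : Submodule ℚ (Fin N → ℚ)) : Submodule ℚ (Fin N → ℚ) :=
  V ⊓ (Matrix.toBilin' (Matrix.of f)).orthogonal V

/-- `W` is a totally isotropic subspace of the quadratic space `(V, F)`. -/
def IsTotallyIsotropic (N : ℕ) (f : Fin N → Fin N → ℚ)
    (V W : Submodule ℚ (Fin N → ℚ)) : Prop :=
  W ≤ V ∧ ∀ x ∈ W, ∀ y ∈ W, ∑ i, ∑ j, f i j * x i * y j = 0

/-- Inhomogeneous height `h(x) = H(1, x)` of a rational vector. -/
noncomputable def inhomHeight {N : ℕ} (x : Fin N → ℚ) : ℕ :=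
  projHeight (Fin.cons 1 x)


theorem szv_bind_deg {σ τ : Type*} (p : MvPolynomial σ ℚ) (Φ : σ → MvPolynomial τ ℚ) (k : ℕ)
    (hΦ : ∀ i, (Φ i).totalDegree ≤ k) :
    (MvPolynomial.bind₁ Φ p).totalDegree ≤ k * p.totalDegree := by
  classical
  rw [MvPolynomial.bind₁, MvPolynomial.aeval_def, MvPolynomial.eval₂_eq]
  apply MvPolynomial.totalDegree_finsetSum_le
  intro d hd
  refine (MvPolynomial.totalDegree_mul _ _).trans ?_
  have h1 : ((algebraMap ℚ (MvPolynomial τ ℚ)) (MvPolynomial.coeff d p)).totalDegree = 0 := by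
    simp [MvPolynomial.algebraMap_eq]
  rw [h1, zero_add]
  refine (MvPolynomial.totalDegree_finsetProd _ _).trans ?_
  calc ∑ i ∈ d.support, (Φ i ^ d i).totalDegree ≤ ∑ i ∈ d.support, k * d i := by
        apply Finset.sum_le_sum
        intro i _
        refine (MvPolynomial.totalDegree_pow _ _).trans ?_
        rw [mul_comm]
        exact Nat.mul_le_mul_right _ (hΦ i)
    _ = k * d.sum fun _ e => e := by rw [← Finset.mul_sum]; rfl
    _ ≤ _ := Nat.mul_le_mul_left _ (MvPolynomial.le_totalDegree hd)

theorem szv_nonvanish {σ : Type*} [Finite σ] (p : MvPolynomial σ ℚ) (d : ℕ)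
    (hd : p.totalDegree ≤ d) (hp : p ≠ 0) :
    ∃ a : σ → ℕ, (∀ i, a i ≤ d) ∧ MvPolynomial.eval (fun i => (a i : ℚ)) p ≠ 0 := by
  classical
  by_contra! hcon
  apply hp
  apply MvPolynomial.eq_zero_of_eval_zero_at_prod_finset p
    (fun _ => (Finset.range (d+1)).image (fun n : ℕ => (n : ℚ)))
  · intro i
    rw [Finset.card_image_of_injective _ Nat.cast_injective, Finset.card_range]
    have := MvPolynomial.degreeOf_le_totalDegree p i
    omega
  · intro x hx
    have : ∀ i, ∃ n : ℕ, n ≤ d ∧ (n : ℚ) = x i := by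
      intro i
      have := hx i
      simp only [Finset.mem_image, Finset.mem_range] at this
      obtain ⟨n, h1, h2⟩ := this
      exact ⟨n, by omega, h2⟩
    choose a ha hax using this
    have h := hcon a ha
    have e : (fun i => (a i : ℚ)) = x := funext hax
    rwa [e] at h

theorem szv_select {σ : Type*} [Finite σ] {L : ℕ} (Φ : Fin L → MvPolynomial σ ℚ) (k M : ℕ)
    (hΦ : ∀ i, (Φ i).totalDegree ≤ k) (P : MvPolynomial (Fin L) ℚ) (hP : P.totalDegree ≤ M)
    (ev : (σ → ℚ) → (Fin L → ℚ)) (hev : ∀ a i, ev a i = MvPolynomial.eval a (Φ i))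
    (hne : ∃ a, MvPolynomial.eval (ev a) P ≠ 0) (m : ℕ)
    (hsp : ∀ U : Submodule ℚ (Fin L → ℚ), Module.finrank ℚ U < m → ∃ a, ev a ∉ U) :
    ∀ n ≤ m, ∃ a : Fin n → (σ → ℕ), (∀ j i, a j i ≤ k * M + k) ∧
      LinearIndependent ℚ (fun j => ev (fun i => (a j i : ℚ))) ∧
      ∀ j, MvPolynomial.eval (ev (fun i => (a j i : ℚ))) P ≠ 0 := by
  classical
  intro n
  induction n with
  | zero =>
    intro _
    exact ⟨fun j => j.elim0, fun j => j.elim0, linearIndependent_empty_type, fun j => j.elim0⟩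
  | succ n ih =>
    intro hn
    obtain ⟨a, ha, hli, hPa⟩ := ih (by omega)
    set U := Submodule.span ℚ (Set.range (fun j => ev (fun i => (a j i : ℚ)))) with hU
    have hfr : Module.finrank ℚ U < m := by
      rw [hU, finrank_span_eq_card hli]; simp; omega
    obtain ⟨b, hb⟩ := hsp U hfr
    obtain ⟨l, hl, hUl⟩ := Submodule.exists_le_ker_of_notMem hb
    obtain ⟨c, hc⟩ := hne
    set q1 := MvPolynomial.bind₁ Φ P
    set q2 : MvPolynomial σ ℚ := ∑ i, MvPolynomial.C (l (Pi.single i 1)) * Φ i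
    have hq1 : ∀ x, MvPolynomial.eval x q1 = MvPolynomial.eval (ev x) P := by
      intro x
      have : ev x = fun i => MvPolynomial.eval x (Φ i) := funext (hev x)
      rw [this]
      simp only [q1, MvPolynomial.eval, MvPolynomial.eval₂Hom_bind₁]
    have hq2 : ∀ x, MvPolynomial.eval x q2 = l (ev x) := by
      intro x
      simp only [q2, map_sum, map_mul, MvPolynomial.eval_C, ← hev]
      conv_rhs => rw [← Finset.univ_sum_single (ev x), map_sum]
      apply Finset.sum_congr rfl
      intro i _
      have : (Pi.single i (ev x i) : Fin L → ℚ) = (ev x i) • Pi.single i 1 := by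
        rw [← Pi.single_smul]; simp
      rw [this, map_smul, smul_eq_mul, mul_comm]
    have hq : q1 * q2 ≠ 0 := by
      apply mul_ne_zero
      · intro h; apply hc; rw [← hq1, h]; simp
      · intro h; apply hl; rw [← hq2, h]; simp
    have hdeg : (q1 * q2).totalDegree ≤ k * M + k := by
      refine (MvPolynomial.totalDegree_mul _ _).trans ?_
      apply add_le_add
      · exact (szv_bind_deg P Φ k hΦ).trans (Nat.mul_le_mul_left _ hP)
      · apply MvPolynomial.totalDegree_finsetSum_le
        intro i _
        refine (MvPolynomial.totalDegree_mul _ _).trans ?_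
        simpa using hΦ i
    obtain ⟨d, hd, hdne⟩ := szv_nonvanish _ _ hdeg hq
    rw [map_mul, hq1, hq2] at hdne
    refine ⟨Fin.snoc a d, ?_, ?_, ?_⟩
    · intro j
      refine Fin.lastCases ?_ (fun j => ?_) j
      · simpa using hd
      · simpa using ha j
    · have e : (fun j => ev (fun i => (((Fin.snoc a d : Fin (n+1) → (σ → ℕ)) j i : ℕ) : ℚ))) =
          (Fin.snoc (fun j => ev (fun i => (a j i : ℚ))) (ev (fun i => (d i : ℚ))) :
            Fin (n+1) → (Fin L → ℚ)) := by
        funext j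
        refine Fin.lastCases ?_ (fun j => ?_) j
        · simp
        · simp
      rw [e, linearIndependent_finSnoc]
      refine ⟨hli, fun hmem => ?_⟩
      exact right_ne_zero_of_mul hdne (hUl hmem)
    · intro j
      refine Fin.lastCases ?_ (fun j => ?_) j
      · simpa using left_ne_zero_of_mul hdne
      · simpa using hPa j

/-- bilinear form attached to a matrix -/
def szvB {κ R : Type*} [Fintype κ] [CommRing R] (A : Matrix κ κ R) (x y : κ → R) : R :=
  ∑ i, ∑ j, A i j * x i * y j

section szvB
variable {κ R : Type*} [Fintype κ] [CommRing R] (A : Matrix κ κ R)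

theorem szvB_add_left (x y z : κ → R) : szvB A (x + y) z = szvB A x z + szvB A y z := by
  simp only [szvB, Pi.add_apply, ← Finset.sum_add_distrib]
  exact Finset.sum_congr rfl fun i _ => Finset.sum_congr rfl fun j _ => by ring

theorem szvB_sub_left (x y z : κ → R) : szvB A (x - y) z = szvB A x z - szvB A y z := by
  simp only [szvB, Pi.sub_apply, ← Finset.sum_sub_distrib]
  exact Finset.sum_congr rfl fun i _ => Finset.sum_congr rfl fun j _ => by ring

theorem szvB_smul_left (c : R) (x z : κ → R) : szvB A (c • x) z = c * szvB A x z := by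
  simp only [szvB, Pi.smul_apply, Finset.mul_sum, smul_eq_mul]
  exact Finset.sum_congr rfl fun i _ => Finset.sum_congr rfl fun j _ => by ring

theorem szvB_comm (hA : ∀ i j, A i j = A j i) (x y : κ → R) : szvB A x y = szvB A y x := by
  simp only [szvB]
  rw [Finset.sum_comm]
  refine Finset.sum_congr rfl fun i _ => Finset.sum_congr rfl fun j _ => ?_
  rw [hA]; ring

theorem szvB_add_right (x y z : κ → R) : szvB A z (x + y) = szvB A z x + szvB A z y := by
  simp only [szvB, Pi.add_apply, ← Finset.sum_add_distrib]
  exact Finset.sum_congr rfl fun i _ => Finset.sum_congr rfl fun j _ => by ring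

theorem szvB_sub_right (x y z : κ → R) : szvB A z (x - y) = szvB A z x - szvB A z y := by
  simp only [szvB, Pi.sub_apply, ← Finset.sum_sub_distrib]
  exact Finset.sum_congr rfl fun i _ => Finset.sum_congr rfl fun j _ => by ring

theorem szvB_smul_right (c : R) (x z : κ → R) : szvB A z (c • x) = c * szvB A z x := by
  simp only [szvB, Pi.smul_apply, Finset.mul_sum, smul_eq_mul]
  exact Finset.sum_congr rfl fun i _ => Finset.sum_congr rfl fun j _ => by ring

/-- the stereographic projection -/
def szvX (y t : κ → R) : κ → R := szvB A t t • y - (2 * szvB A t y) • t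

theorem szvX_isotropic (hA : ∀ i j, A i j = A j i) (y t : κ → R) (hy : szvB A y y = 0) :
    szvB A (szvX A y t) (szvX A y t) = 0 := by
  simp only [szvX, szvB_sub_left, szvB_sub_right, szvB_smul_left, szvB_smul_right, hy,
    szvB_comm A hA y t]
  ring

end szvB

theorem szvB_bound {κ : Type*} [Fintype κ] (A : Matrix κ κ ℤ) (G X Y : ℤ)
    (hG : ∀ i j, |A i j| ≤ G) (x y : κ → ℤ)
    (hx : ∀ i, |x i| ≤ X) (hy : ∀ i, |y i| ≤ Y) :
    |szvB A x y| ≤ (Fintype.card κ : ℤ) ^ 2 * G * X * Y := by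
  have h : ∀ i j, |A i j * x i * y j| ≤ G * X * Y := by
    intro i j
    rw [abs_mul, abs_mul]
    have h1 := hG i j
    have h2 := hx i
    have h3 := hy j
    have := abs_nonneg (A i j)
    have := abs_nonneg (x i)
    have := abs_nonneg (y j)
    have hG0 : 0 ≤ G := by linarith
    have hX0 : 0 ≤ X := by linarith
    gcongr
  calc |szvB A x y| ≤ ∑ i, ∑ j, |A i j * x i * y j| :=
        (Finset.abs_sum_le_sum_abs _ _).trans
          (Finset.sum_le_sum fun i _ => Finset.abs_sum_le_sum_abs _ _)
    _ ≤ ∑ i : κ, ∑ j : κ, G * X * Y := Finset.sum_le_sum fun i _ => Finset.sum_le_sum fun j _ => h i j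
    _ = _ := by simp; ring

/-- Dirichlet -/
theorem szv_dirichlet {κ : Type*} [Fintype κ] (a : κ → ℤ) (T Q : ℕ) (hT : 0 < T) (hQ : 0 < Q) :
    ∃ (q : ℤ) (b : κ → ℤ), 0 < q ∧ q ≤ (Q : ℤ) ^ Fintype.card κ ∧
      ∀ j, (Q : ℤ) * |q * a j - T * b j| < T := by
  classical
  have hT' : (0 : ℤ) < T := by exact_mod_cast hT
  have hQ' : (0 : ℤ) < Q := by exact_mod_cast hQ
  let g : ℤ → κ → ℤ := fun q j => (Q : ℤ) * ((q * a j) % T) / T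
  have g0 : ∀ q j, 0 ≤ g q j := fun q j =>
    Int.ediv_nonneg (mul_nonneg hQ'.le (Int.emod_nonneg _ hT'.ne')) hT'.le
  have g1 : ∀ q j, g q j < Q := by
    intro q j
    apply Int.ediv_lt_of_lt_mul hT'
    exact mul_lt_mul_of_pos_left (Int.emod_lt_of_pos _ hT') hQ'
  let φ : Fin (Q ^ Fintype.card κ + 1) → (κ → Fin Q) := fun q j =>
    ⟨(g (q : ℕ) j).toNat, by have := g0 (q : ℕ) j; have := g1 (q : ℕ) j; omega⟩
  obtain ⟨q1, q2, hne, he⟩ := Fintype.exists_ne_map_eq_of_card_lt φ (by simp)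
  wlog hlt : q2 < q1 generalizing q1 q2
  · exact this q2 q1 hne.symm he.symm (lt_of_le_of_ne (not_lt.mp hlt) hne)
  refine ⟨(q1 : ℕ) - (q2 : ℕ), fun j => ((q1 : ℕ) * a j) / T - ((q2 : ℕ) * a j) / T, ?_, ?_, ?_⟩
  · have : (q2 : ℕ) < q1 := hlt
    omega
  · have h1 := q1.2
    have h2 : ((q1 : ℕ) : ℤ) ≤ ((Q ^ Fintype.card κ : ℕ) : ℤ) := by
      exact_mod_cast (by omega : (q1 : ℕ) ≤ Q ^ Fintype.card κ)
    push_cast at h2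
    omega
  · intro j
    have h := congrFun he j
    simp only [φ, Fin.mk.injEq] at h
    have h' : g (q1 : ℕ) j = g (q2 : ℕ) j := by
      have := g0 (q1 : ℕ) j; have := g0 (q2 : ℕ) j; omega
    set u := ((q1 : ℕ) : ℤ) * a j
    set v := ((q2 : ℕ) : ℤ) * a j
    have e1 : u % T + T * (u / T) = u := Int.emod_add_mul_ediv u T
    have e2 : v % T + T * (v / T) = v := Int.emod_add_mul_ediv v T
    have e3 : (((q1 : ℕ) : ℤ) - (q2 : ℕ)) * a j - T * (u / T - v / T) = u % T - v % T := by
      rw [sub_mul, mul_sub]; change u - v - _ = _; linarith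
    rw [e3]
    have k1 := Int.emod_add_mul_ediv ((Q : ℤ) * (u % T)) T
    have k2 := Int.emod_add_mul_ediv ((Q : ℤ) * (v % T)) T
    have l1 := Int.emod_nonneg ((Q : ℤ) * (u % T)) hT'.ne'
    have l2 := Int.emod_nonneg ((Q : ℤ) * (v % T)) hT'.ne'
    have l3 := Int.emod_lt_of_pos ((Q : ℤ) * (u % T)) hT'
    have l4 := Int.emod_lt_of_pos ((Q : ℤ) * (v % T)) hT'
    have h'' : (Q : ℤ) * (u % T) / T = (Q : ℤ) * (v % T) / T := h'
    rw [← abs_of_pos hQ', ← abs_mul, mul_sub]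
    rw [h''] at k1
    rw [abs_lt]
    constructor <;> linarith

theorem szv_cassels {κ : Type*} [Fintype κ] (A : Matrix κ κ ℤ) (hA : ∀ i j, A i j = A j i)
    (G Q : ℕ) (hG : ∀ i j, |A i j| ≤ G) (hQ : 0 < Q) (hGQ : 3 * Fintype.card κ ^ 2 * G ≤ Q ^ 2)
    (hz : ∃ z : κ → ℤ, z ≠ 0 ∧ szvB A z z = 0) :
    ∃ z : κ → ℤ, z ≠ 0 ∧ szvB A z z = 0 ∧ ∀ i, |z i| ≤ (Q : ℤ) ^ Fintype.card κ := by
  classical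
  let S : Set ℕ := {T | ∃ z : κ → ℤ, z ≠ 0 ∧ szvB A z z = 0 ∧ ∀ i, |z i| ≤ T}
  have hS : S.Nonempty := by
    obtain ⟨z, h1, h2⟩ := hz
    refine ⟨Finset.univ.sup fun i => (z i).natAbs, z, h1, h2, fun i => ?_⟩
    rw [Int.abs_eq_natAbs]
    exact_mod_cast Finset.le_sup (f := fun i => (z i).natAbs) (Finset.mem_univ i)
  have hmin : ∀ z : κ → ℤ, szvB A z z = 0 → (∀ i, |z i| < (sInf S : ℕ)) → z = 0 := by
    intro z h0 h1
    by_contra hne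
    obtain ⟨i0, _⟩ : ∃ i, z i ≠ 0 := by
      by_contra! h; exact hne (funext h)
    have hpos : 0 < sInf S := by
      have := h1 i0
      have := abs_nonneg (z i0)
      omega
    have : sInf S - 1 ∈ S := ⟨z, hne, h0, fun i => by have := h1 i; omega⟩
    have := Nat.sInf_le this
    omega
  obtain ⟨a, ha0, haz, hab⟩ := Nat.sInf_mem hS
  set T := sInf S with hTdef
  by_cases hTQ : T ≤ Q ^ Fintype.card κ
  · exact ⟨a, ha0, haz, fun i => (hab i).trans (by exact_mod_cast hTQ)⟩
  exfalso
  push Not at hTQ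
  have hT : 0 < T := by omega
  obtain ⟨i0, hi0⟩ : ∃ i, (T : ℤ) ≤ |a i| := by
    by_contra! h
    exact ha0 (hmin a haz h)
  obtain ⟨q, b, hq0, hq1, hd⟩ := szv_dirichlet a T Q hT hQ
  have hT' : (0 : ℤ) < T := by exact_mod_cast hT
  have hQ' : (0 : ℤ) < Q := by exact_mod_cast hQ
  have hqT : q < T := hq1.trans_lt (by exact_mod_cast hTQ)
  set d : κ → ℤ := fun j => q * a j - T * b j with hdd
  have hdT : ∀ j, |d j| < T := by
    intro j
    have h1 : (Q : ℤ) * |d j| < T := hd j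
    have := abs_nonneg (d j)
    nlinarith
  have hb0 : b ≠ 0 := by
    intro hb
    have h := hdT i0
    simp only [hdd, hb, Pi.zero_apply, mul_zero, sub_zero, abs_mul] at h
    rw [abs_of_pos hq0] at h
    nlinarith
  have hbT : ∀ j, |b j| < T := by
    intro j
    have h1 := hdT j
    have h2 : (T : ℤ) * b j = q * a j - d j := by simp only [hdd]; ring
    have h3 : |(T : ℤ) * b j| ≤ |q * a j| + |d j| := by rw [h2]; exact abs_sub _ _
    rw [abs_mul, abs_mul, abs_of_pos hq0, abs_of_pos hT'] at h3
    have h4 := hab j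
    have h5 : q * |a j| ≤ (T - 1) * T := mul_le_mul (by omega) h4 (abs_nonneg _) (by omega)
    by_contra! h6
    nlinarith
  have hfb : szvB A b b ≠ 0 := fun h => hb0 (hmin b h hbT)
  have hkey : ((T : ℤ) ^ 2) • szvX A a b = szvX A a d := by
    have hbd : ((T : ℤ)) • b = q • a - d := by
      funext j; simp [hdd]
    have e1 : (T : ℤ) ^ 2 * szvB A b b = szvB A d d - 2 * q * szvB A d a := by
      have : szvB A ((T : ℤ) • b) ((T : ℤ) • b) = (T : ℤ) ^ 2 * szvB A b b := by
        rw [szvB_smul_left, szvB_smul_right]; ring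
      rw [← this, hbd]
      simp only [szvB_sub_left, szvB_sub_right, szvB_smul_left, szvB_smul_right, haz,
        szvB_comm A hA a d]
      ring
    have e2 : (T : ℤ) * szvB A b a = - szvB A d a := by
      rw [← szvB_smul_left, hbd]
      simp only [szvB_sub_left, szvB_smul_left, haz]
      ring
    funext j
    have e3 : (T : ℤ) * b j = q * a j - d j := by simp only [hdd]; ring
    simp only [szvX, Pi.smul_apply, Pi.sub_apply, smul_eq_mul]
    have : (T : ℤ) ^ 2 * (szvB A b b * a j - 2 * szvB A b a * b j)
      = ((T : ℤ) ^ 2 * szvB A b b) * a j - 2 * ((T : ℤ) * szvB A b a) * (T * b j) := by ring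
    rw [this, e1, e2, e3]
    ring
  have hX0 : szvX A a b = 0 := by
    apply hmin _ (szvX_isotropic A hA a b haz)
    intro j
    have hk := congrFun hkey j
    simp only [Pi.smul_apply, smul_eq_mul] at hk
    -- scaled bound
    set d' : κ → ℤ := fun j => (Q : ℤ) * d j with hd'
    have hd'b : ∀ i, |d' i| ≤ (T : ℤ) - 1 := by
      intro i
      have h1 : (Q : ℤ) * |d i| < T := hd i
      simp only [hd', abs_mul, abs_of_pos hQ']
      omega
    have b1 := szvB_bound A G _ _ hG d' d' hd'b hd'b
    have b2 := szvB_bound A G _ _ hG d' a hd'b hab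
    have hd's : d' = (Q : ℤ) • d := by funext i; simp [hd']
    have hX : (Q : ℤ) ^ 2 * szvX A a d j = szvX A a d' j := by
      simp only [szvX, hd's, Pi.smul_apply, Pi.sub_apply, smul_eq_mul, szvB_smul_left,
        szvB_smul_right]
      ring
    set r : ℤ := (Fintype.card κ : ℤ)
    have hrG : 0 ≤ r ^ 2 * (G : ℤ) := by positivity
    have b3 : |szvX A a d' j| ≤ 3 * (r ^ 2 * G) * ((T - 1) * (T - 1) * T) := by
      simp only [szvX, Pi.sub_apply, Pi.smul_apply, smul_eq_mul]
      refine (abs_sub _ _).trans ?_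
      rw [abs_mul, abs_mul, abs_mul, abs_two]
      have h1 := mul_le_mul b1 (hab j) (abs_nonneg _) ((abs_nonneg _).trans b1)
      have h2 := mul_le_mul b2 (hd'b j) (abs_nonneg _) ((abs_nonneg _).trans b2)
      nlinarith
    have hGQ' : 3 * (r ^ 2 * G) ≤ (Q : ℤ) ^ 2 := by
      have : ((3 * Fintype.card κ ^ 2 * G : ℕ) : ℤ) ≤ ((Q ^ 2 : ℕ) : ℤ) := by exact_mod_cast hGQ
      push_cast at this
      linarith
    have b4 : |szvX A a d' j| = (Q : ℤ) ^ 2 * ((T : ℤ) ^ 2 * |szvX A a b j|) := by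
      rw [← hX, ← hk, abs_mul, abs_mul, abs_of_nonneg (by positivity : (0 : ℤ) ≤ (Q : ℤ) ^ 2),
        abs_of_nonneg (by positivity : (0 : ℤ) ≤ (T : ℤ) ^ 2)]
    have hTT : (0 : ℤ) ≤ (T - 1) * (T - 1) * T := by
      have : (0 : ℤ) ≤ T - 1 := by omega
      positivity
    have b5 : (Q : ℤ) ^ 2 * ((T : ℤ) ^ 2 * |szvX A a b j|) ≤ (Q : ℤ) ^ 2 * ((T - 1) * (T - 1) * T) := by
      rw [← b4]
      exact b3.trans (mul_le_mul_of_nonneg_right hGQ' hTT)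
    have b6 := le_of_mul_le_mul_left b5 (by positivity)
    by_contra! h7
    have : (T : ℤ) ^ 2 * T ≤ (T : ℤ) ^ 2 * |szvX A a b j| := by gcongr
    nlinarith
  -- conclude
  have h1 : szvB A b b • a = (2 * szvB A b a) • b := by
    have := hX0; rw [szvX, sub_eq_zero] at this; exact this
  have h2 : szvB A b a = 0 := by
    have h3 : szvB A (szvB A b b • a) (szvB A b b • a) = 0 := by
      rw [szvB_smul_left, szvB_smul_right, haz]; ring
    rw [h1, szvB_smul_left, szvB_smul_right] at h3
    by_contra h4
    have : (2 * szvB A b a) * ((2 * szvB A b a) * szvB A b b) ≠ 0 := by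
      simp [h4, hfb]
    exact this h3
  rw [h2, mul_zero, zero_smul] at h1
  exact ha0 ((smul_eq_zero.mp h1).resolve_left hfb)

theorem szvB_eq {κ R : Type*} [Fintype κ] [CommRing R] (A : Matrix κ κ R) (x y : κ → R) :
    szvB A x y = x ⬝ᵥ (A.mulVec y) := by
  simp only [szvB, dotProduct, Matrix.mulVec, Finset.mul_sum]
  exact Finset.sum_congr rfl fun i _ => Finset.sum_congr rfl fun j _ => by ring

/-- cast of an integer vector -/
def szvc {κ : Type*} (x : κ → ℤ) : κ → ℚ := fun i => (x i : ℚ)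

theorem szvB_cast {κ : Type*} [Fintype κ] (A : Matrix κ κ ℤ) (x y : κ → ℤ) :
    szvB (A.map (Int.cast : ℤ → ℚ)) (szvc x) (szvc y) = ((szvB A x y : ℤ) : ℚ) := by
  simp [szvB, szvc]

theorem szv_mulVec_cast {κ τ : Type*} [Fintype κ] (A : Matrix τ κ ℤ) (x : κ → ℤ) :
    (A.map (Int.cast : ℤ → ℚ)).mulVec (szvc x) = szvc (A.mulVec x) := by
  funext i
  simp [szvc, Matrix.mulVec, dotProduct]

theorem szvc_inj {κ : Type*} {x y : κ → ℤ} (h : szvc x = szvc y) : x = y := by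
  funext i
  have := congrFun h i
  simpa [szvc] using this

theorem szv_clear {κ : Type*} [Finite κ] (x : κ → ℚ) :
    ∃ (c : ℤ) (y : κ → ℤ), c ≠ 0 ∧ szvc y = (c : ℚ) • x := by
  obtain ⟨b, hb⟩ := IsLocalization.exist_integer_multiples_of_finite (nonZeroDivisors ℤ) x
  choose y hy using hb
  refine ⟨b, y, nonZeroDivisors.ne_zero b.2, ?_⟩
  funext i
  have := hy i
  simpa [szvc] using this

theorem szv_compl {L : ℕ} (A : Matrix (Fin L) (Fin L) ℤ) (hA : ∀ i j, A i j = A j i) :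
    ∃ (κ : Type) (_ : Fintype κ) (_ : DecidableEq κ) (a : κ → Fin L), Function.Injective a ∧
      (A.submatrix a a).det ≠ 0 ∧
      ∀ x : Fin L → ℚ, (∀ k, (A.map (Int.cast : ℤ → ℚ)).mulVec x (a k) = 0) →
        (A.map (Int.cast : ℤ → ℚ)).mulVec x = 0 := by
  classical
  set Aq := A.map (Int.cast : ℤ → ℚ) with hAq
  obtain ⟨κ, a, ha, hsp, hli⟩ := exists_linearIndependent' ℚ (fun i => Aq i)
  have : Finite κ := Finite.of_injective a ha
  have : Fintype κ := Fintype.ofFinite κ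
  refine ⟨κ, inferInstance, inferInstance, a, ha, ?_, ?_⟩
  rotate_left
  all_goals
    have h2 : ∀ x : Fin L → ℚ, (∀ k, Aq.mulVec x (a k) = 0) → Aq.mulVec x = 0 := by
      intro x hx
      funext i
      have hmem : Aq i ∈ Submodule.span ℚ (Set.range ((fun i => Aq i) ∘ a)) := by
        rw [hsp]; exact Submodule.subset_span ⟨i, rfl⟩
      have : ∀ v ∈ Submodule.span ℚ (Set.range ((fun i => Aq i) ∘ a)), v ⬝ᵥ x = 0 := by
        intro v hv
        induction hv using Submodule.span_induction with
        | mem v hv => obtain ⟨k, rfl⟩ := hv; exact hx k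
        | zero => simp
        | add u v _ _ h1 h2 => rw [add_dotProduct, h1, h2, add_zero]
        | smul c u _ h => rw [smul_dotProduct, h, smul_zero]
      exact this _ hmem
  · exact h2
  · intro hdet
    have hdet' : (Aq.submatrix a a).det = 0 := by
      have : Aq.submatrix a a = (A.submatrix a a).map (Int.castRingHom ℚ) := rfl
      rw [this]
      have e : ((A.submatrix a a).map (Int.castRingHom ℚ)).det
        = Int.castRingHom ℚ (A.submatrix a a).det := (RingHom.map_det _ _).symm
      rw [e, hdet]; simp
    obtain ⟨u, hu0, hu⟩ := Matrix.exists_mulVec_eq_zero_iff.mpr hdet'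
    apply hu0
    set x : Fin L → ℚ := ∑ k, u k • Pi.single (a k) 1 with hx
    have hx1 : ∀ i, Aq.mulVec x i = ∑ k, Aq i (a k) * u k := by
      intro i
      rw [hx, Matrix.mulVec_sum, Finset.sum_apply]
      refine Finset.sum_congr rfl fun k _ => ?_
      rw [Matrix.mulVec_smul, Pi.smul_apply, Matrix.mulVec_single_one, smul_eq_mul, mul_comm]
      rfl
    have hx2 := h2 x (by
      intro k
      rw [hx1]
      exact congrFun hu k)
    funext k
    refine (Fintype.linearIndependent_iff.mp hli) u ?_ k
    funext j
    have h3 := congrFun hx2 j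
    rw [hx1] at h3
    rw [Finset.sum_apply]
    refine Eq.trans (Finset.sum_congr rfl fun k _ => ?_) h3
    simp only [Function.comp, Pi.smul_apply, smul_eq_mul, hAq, Matrix.map_apply]
    rw [hA, mul_comm]

theorem szv_abs_sum_le {κ : Type*} [Fintype κ] (x : κ → ℤ) (X : ℤ) (L : ℕ) (hX : 0 ≤ X)
    (hc : Fintype.card κ ≤ L)
    (h : ∀ i, |x i| ≤ X) : |∑ i, x i| ≤ L * X := by
  calc |∑ i, x i| ≤ ∑ i, |x i| := Finset.abs_sum_le_sum_abs _ _
    _ ≤ ∑ i : κ, X := Finset.sum_le_sum fun i _ => h i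
    _ = Fintype.card κ * X := by simp
    _ ≤ L * X := by gcongr

/-- data of a projection to the radical and a small nonradical zero -/
theorem szv_proj {L : ℕ} (A : Matrix (Fin L) (Fin L) ℤ) (hA : ∀ i j, A i j = A j i)
    (G : ℕ) (hG1 : 1 ≤ G) (hG : ∀ i j, |A i j| ≤ G) :
    (∃ (K : Matrix (Fin L) (Fin L) ℤ) (D : ℤ), D ≠ 0 ∧
      (∀ i j, |K i j| ≤ (((L ^ 2 + 1) * L.factorial * G ^ (L + 1) : ℕ) : ℤ)) ∧
      (∀ x, (A.map (Int.cast : ℤ → ℚ)).mulVec ((K.map (Int.cast : ℤ → ℚ)).mulVec x) = 0) ∧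
      (∀ x, (A.map (Int.cast : ℤ → ℚ)).mulVec x = 0 →
        (K.map (Int.cast : ℤ → ℚ)).mulVec x = (D : ℚ) • x)) ∧
    ((∃ z : Fin L → ℚ, szvB (A.map (Int.cast : ℤ → ℚ)) z z = 0 ∧
      (A.map (Int.cast : ℤ → ℚ)).mulVec z ≠ 0) →
      ∃ y : Fin L → ℤ, szvB A y y = 0 ∧ A.mulVec y ≠ 0 ∧
        ∀ i, |y i| ≤ ((L * (3 * L ^ 2 * G) ^ L : ℕ) : ℤ)) := by
  obtain ⟨κ, _, _, a, ha, hdet, hrad⟩ := szv_compl A hA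
  set Aq := A.map (Int.cast : ℤ → ℚ) with hAq
  have hcard : Fintype.card κ ≤ L := by
    simpa using Fintype.card_le_of_injective a ha
  set AII := A.submatrix a a with hAII
  set AI := A.submatrix a id with hAI
  set E : Matrix (Fin L) κ ℤ := fun i k => if a k = i then 1 else 0 with hE
  set D := AII.det with hD
  have hEA : AI * E = AII := by
    ext k l
    rw [Matrix.mul_apply]
    simp [hE, hAI, hAII]
  set K : Matrix (Fin L) (Fin L) ℤ := D • 1 - E * (AII.adjugate * AI) with hK
  have hEb : ∀ i k, |E i k| ≤ 1 := by
    intro i k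
    simp only [hE]
    split_ifs <;> simp
  have hAK : AI * K = 0 := by
    rw [hK, Matrix.mul_sub, ← Matrix.mul_assoc, hEA, ← Matrix.mul_assoc, Matrix.mul_adjugate, Matrix.mul_smul,
      Matrix.mul_one, Matrix.smul_mul, Matrix.one_mul, sub_self]
  have hmap : ∀ {p q r : Type} [Fintype q] (X : Matrix p q ℤ) (Y : Matrix q r ℤ),
      (X * Y).map (Int.cast : ℤ → ℚ) = X.map (Int.cast : ℤ → ℚ) * Y.map (Int.cast : ℤ → ℚ) := by
    intro p q r _ X Y
    ext i j
    simp [Matrix.mul_apply]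
  have hKrad : ∀ x, Aq.mulVec ((K.map (Int.cast : ℤ → ℚ)).mulVec x) = 0 := by
    intro x
    apply hrad
    intro k
    have h1 : (AI.map (Int.cast : ℤ → ℚ)).mulVec ((K.map (Int.cast : ℤ → ℚ)).mulVec x) = 0 := by
      rw [Matrix.mulVec_mulVec, ← hmap, hAK]
      funext i; simp [Matrix.mulVec, dotProduct]
    exact congrFun h1 k
  have hKx : ∀ x, (K.map (Int.cast : ℤ → ℚ)).mulVec x = (D : ℚ) • x -
      (E.map (Int.cast : ℤ → ℚ)).mulVec ((AII.adjugate.map (Int.cast : ℤ → ℚ)).mulVec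
        ((AI.map (Int.cast : ℤ → ℚ)).mulVec x)) := by
    intro x
    rw [Matrix.mulVec_mulVec, Matrix.mulVec_mulVec, ← hmap, ← hmap]
    have : K.map (Int.cast : ℤ → ℚ) = (D : ℚ) • 1 -
      (E * (AII.adjugate * AI)).map (Int.cast : ℤ → ℚ) := by
      ext i j
      simp only [hK, Matrix.map_apply, Matrix.sub_apply, Matrix.smul_apply, Matrix.one_apply,
        smul_eq_mul]
      split_ifs <;> simp
    rw [this, Matrix.sub_mulVec, Matrix.smul_mulVec, Matrix.one_mulVec, Matrix.mul_assoc]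
  have hAIx : ∀ x, (AI.map (Int.cast : ℤ → ℚ)).mulVec x = fun k => Aq.mulVec x (a k) := by
    intro x; rfl
  refine ⟨⟨K, D, hdet, ?_, hKrad, ?_⟩, ?_⟩
  · intro i j
    have hadj : ∀ k l, |AII.adjugate k l| ≤ ((L.factorial * G ^ L : ℕ) : ℤ) := by
      intro k l
      rw [Matrix.adjugate_apply]
      have := Matrix.det_le (A := AII.updateRow l (Pi.single k 1)) (abv := AbsoluteValue.abs)
        (x := (G : ℤ)) (by
          intro p q
          rw [Matrix.updateRow_apply]
          split_ifs
          · rw [Pi.single_apply]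
            split_ifs
            · simpa using hG1
            · simp
          · exact hG _ _)
      refine (this).trans ?_
      rw [nsmul_eq_mul]
      exact_mod_cast Nat.mul_le_mul (Nat.factorial_le hcard) (Nat.pow_le_pow_right hG1 hcard)
    have hDb : |D| ≤ ((L.factorial * G ^ L : ℕ) : ℤ) := by
      have := Matrix.det_le (A := AII) (abv := AbsoluteValue.abs)
        (x := (G : ℤ)) (fun p q => hG _ _)
      refine (this).trans ?_
      rw [nsmul_eq_mul]
      exact_mod_cast Nat.mul_le_mul (Nat.factorial_le hcard) (Nat.pow_le_pow_right hG1 hcard)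
    set Z : ℤ := ((L.factorial * G ^ L : ℕ) : ℤ) with hZ
    have hZ0 : 0 ≤ Z := by positivity
    have hG0 : (1 : ℤ) ≤ G := by exact_mod_cast hG1
    have h1 : ∀ k, |(AII.adjugate * AI) k j| ≤ L * (Z * G) := by
      intro k
      rw [Matrix.mul_apply]
      apply szv_abs_sum_le _ _ _ (by positivity) hcard
      intro l
      rw [abs_mul]
      exact mul_le_mul (hadj _ _) (hG _ _) (abs_nonneg _) hZ0
    have h2 : |(E * (AII.adjugate * AI)) i j| ≤ L * (L * (Z * G)) := by
      rw [Matrix.mul_apply]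
      apply szv_abs_sum_le _ _ _ (by positivity) hcard
      intro k
      rw [abs_mul]
      have := mul_le_mul (hEb i k) (h1 k) (abs_nonneg _) zero_le_one
      linarith
    have h3 : |(D • (1 : Matrix (Fin L) (Fin L) ℤ)) i j| ≤ Z := by
      rw [Matrix.smul_apply, Matrix.one_apply]
      split_ifs
      · simpa using hDb
      · simpa using hZ0
    have h4 : |K i j| ≤ Z + L * (L * (Z * G)) := by
      rw [hK, Matrix.sub_apply]
      exact (abs_sub _ _).trans (add_le_add h3 h2)
    refine h4.trans ?_
    have h5 : (((L ^ 2 + 1) * L.factorial * G ^ (L + 1) : ℕ) : ℤ) = (L ^ 2 + 1) * (Z * G) := by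
      rw [hZ]; push_cast; ring
    rw [h5]
    nlinarith
  · intro x hx
    rw [hKx, hAIx, hx]
    have : (fun k : κ => (0 : Fin L → ℚ) (a k)) = 0 := rfl
    rw [this]; simp
  · rintro ⟨z, hz0, hzr⟩
    set u := (AII.adjugate.map (Int.cast : ℤ → ℚ)).mulVec
        ((AI.map (Int.cast : ℤ → ℚ)).mulVec z) with hu
    have hDz := hKx z
    rw [← hu] at hDz
    have hDq : (D : ℚ) ≠ 0 := by exact_mod_cast hdet
    have hEu : (E.map (Int.cast : ℤ → ℚ)).mulVec u =
        (D : ℚ) • z - (K.map (Int.cast : ℤ → ℚ)).mulVec z := by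
      rw [hDz]; simp
    have hu0 : u ≠ 0 := by
      intro h
      rw [h, Matrix.mulVec_zero] at hEu
      have h1 := hKrad z
      rw [← sub_eq_zero.mp hEu.symm, Matrix.mulVec_smul] at h1
      exact hzr ((smul_eq_zero.mp h1).resolve_left hDq)
    have hAqs : ∀ i j, Aq i j = Aq j i := by
      intro i j; simp [hAq, hA i j]
    have hEuz : szvB Aq ((E.map (Int.cast : ℤ → ℚ)).mulVec u)
        ((E.map (Int.cast : ℤ → ℚ)).mulVec u) = 0 := by
      have h1 : ∀ w, szvB Aq w ((K.map (Int.cast : ℤ → ℚ)).mulVec z) = 0 := by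
        intro w; rw [szvB_eq, hKrad]; simp
      have h2 : ∀ w, szvB Aq ((K.map (Int.cast : ℤ → ℚ)).mulVec z) w = 0 := by
        intro w; rw [szvB_comm Aq hAqs]; exact h1 w
      rw [hEu]
      simp only [szvB_sub_left, szvB_sub_right, szvB_smul_left, szvB_smul_right, h1, h2, hz0]
      simp
    obtain ⟨c, v, hc, hv⟩ := szv_clear u
    have hcq : (c : ℚ) ≠ 0 := by exact_mod_cast hc
    have hEE : ∀ w : κ → ℤ, szvB A (E.mulVec w) (E.mulVec w) = szvB AII w w := by
      intro w
      have : AI.mulVec (E.mulVec w) = AII.mulVec w := by rw [Matrix.mulVec_mulVec, hEA]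
      rw [szvB_eq, szvB_eq, ← this, Matrix.dotProduct_mulVec, ← Matrix.dotProduct_mulVec]
      simp only [dotProduct]
      have h1 : ∀ i, E.mulVec w i = ∑ k, if a k = i then w k else 0 := by
        intro i
        simp [Matrix.mulVec, dotProduct, hE]
      calc ∑ i, E.mulVec w i * A.mulVec (E.mulVec w) i
          = ∑ i, ∑ k, (if a k = i then w k * A.mulVec (E.mulVec w) i else 0) := by
            refine Finset.sum_congr rfl fun i _ => ?_
            conv_lhs => rw [h1 i]
            rw [Finset.sum_mul]
            refine Finset.sum_congr rfl fun k _ => ?_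
            split_ifs <;> simp
        _ = ∑ k, w k * A.mulVec (E.mulVec w) (a k) := by
            rw [Finset.sum_comm]
            refine Finset.sum_congr rfl fun k _ => ?_
            simp
        _ = _ := rfl
    have hvz : szvB AII v v = 0 := by
      have h1 : szvB Aq (szvc (E.mulVec v)) (szvc (E.mulVec v)) = 0 := by
        rw [← szv_mulVec_cast, hv, Matrix.mulVec_smul, szvB_smul_left, szvB_smul_right, hEuz]
        simp
      rw [hAq, szvB_cast, hEE] at h1
      exact_mod_cast h1
    have hv0 : v ≠ 0 := by
      intro h
      rw [h] at hv
      have : (c : ℚ) • u = 0 := by rw [← hv]; funext i; simp [szvc]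
      exact hu0 ((smul_eq_zero.mp this).resolve_left hcq)
    have hL : 1 ≤ L := by
      by_contra h
      have : L = 0 := by omega
      subst this
      apply hv0; funext k; exact (a k).elim0
    set Q := 3 * L ^ 2 * G with hQ
    have hQ1 : 1 ≤ Q := by
      rw [hQ]; exact Nat.one_le_iff_ne_zero.mpr (by positivity)
    obtain ⟨w, hw0, hwz, hwb⟩ := szv_cassels AII (fun i j => hA _ _) G Q (fun i j => hG _ _)
      hQ1 (by
        calc 3 * Fintype.card κ ^ 2 * G ≤ 3 * L ^ 2 * G := by gcongr
          _ ≤ Q ^ 2 := by rw [← hQ]; nlinarith) ⟨v, hv0, hvz⟩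
    refine ⟨E.mulVec w, by rw [hEE, hwz], ?_, ?_⟩
    · intro h
      have h1 : AII.mulVec w = 0 := by
        rw [← hEA, ← Matrix.mulVec_mulVec]
        funext k
        exact congrFun h (a k)
      exact hw0 (Matrix.eq_zero_of_mulVec_eq_zero hdet h1)
    · intro i
      rw [Matrix.mulVec, dotProduct]
      push_cast
      apply szv_abs_sum_le _ _ _ (by positivity) hcard
      intro k
      rw [abs_mul]
      have h1 : |w k| ≤ (Q : ℤ) ^ L := (hwb k).trans (by
        exact_mod_cast Nat.pow_le_pow_right hQ1 hcard)
      have := mul_le_mul (hEb i k) h1 (abs_nonneg _) zero_le_one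
      linarith

/-- predicate of the core conclusion -/
def szvGood {L : ℕ} (A : Matrix (Fin L) (Fin L) ℤ) (P : MvPolynomial (Fin L) ℚ) (m : ℕ) (X : ℤ) :
    Prop :=
  ∃ x : Fin m → (Fin L → ℤ), LinearIndependent ℚ (fun n => szvc (x n)) ∧
    (∀ n, szvB A (x n) (x n) = 0) ∧ (∀ n, MvPolynomial.eval (szvc (x n)) P ≠ 0) ∧
    ∀ n i, |x n i| ≤ X

theorem szv_caseB {L : ℕ} (M : ℕ) (A : Matrix (Fin L) (Fin L) ℤ) (hA : ∀ i j, A i j = A j i)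
    (G : ℕ) (hG1 : 1 ≤ G) (hG : ∀ i j, |A i j| ≤ G)
    (P : MvPolynomial (Fin L) ℚ) (hP : P.totalDegree ≤ M) (m : ℕ)
    (z : Fin L → ℚ) (hz : szvB (A.map (Int.cast : ℤ → ℚ)) z z = 0)
    (hPz : MvPolynomial.eval z P ≠ 0)
    (W : Submodule ℚ (Fin L → ℚ)) (hWm : Module.finrank ℚ W = m)
    (hW : ∀ x ∈ W, ∀ y ∈ W, szvB (A.map (Int.cast : ℤ → ℚ)) x y = 0)
    (hB : ∀ x, szvB (A.map (Int.cast : ℤ → ℚ)) x x = 0 →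
      (A.map (Int.cast : ℤ → ℚ)).mulVec x = 0) :
    szvGood A P m ((L * (((L ^ 2 + 1) * L.factorial * G ^ (L + 1)) * (M + 1)) : ℕ) : ℤ) := by
  obtain ⟨⟨K, D, hD, hKb, hKr, hKD⟩, -⟩ := szv_proj A hA G hG1 hG
  set Aq := A.map (Int.cast : ℤ → ℚ) with hAq
  set Kq := K.map (Int.cast : ℤ → ℚ) with hKq
  have hDq : (D : ℚ) ≠ 0 := by exact_mod_cast hD
  have hsurj : ∀ w, Aq.mulVec w = 0 → Kq.mulVec ((D : ℚ)⁻¹ • w) = w := by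
    intro w hw
    rw [Matrix.mulVec_smul, hKD w hw, smul_smul, inv_mul_cancel₀ hDq, one_smul]
  obtain ⟨a, hab, hali, haP⟩ := szv_select
    (fun k => ∑ j, MvPolynomial.C (Kq k j) * MvPolynomial.X j) 1 M
    (by
      intro i
      apply MvPolynomial.totalDegree_finsetSum_le
      intro j _
      refine (MvPolynomial.totalDegree_mul _ _).trans ?_
      simp) P hP (fun a => Kq.mulVec a) (by
        intro a i
        simp [Matrix.mulVec, dotProduct])
    ⟨(D : ℚ)⁻¹ • z, by rw [hsurj z (hB z hz)]; exact hPz⟩ m (by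
      intro U hU
      by_contra! hcon
      have : W ≤ U := by
        intro w hw
        have h1 := hcon ((D : ℚ)⁻¹ • w)
        rwa [hsurj w (hB w (hW w hw w hw))] at h1
      have := Submodule.finrank_mono this
      omega) m le_rfl
  have hc : ∀ j, szvc (K.mulVec (fun i => (a j i : ℤ))) = Kq.mulVec (fun i => (a j i : ℚ)) := by
    intro j
    rw [← szv_mulVec_cast]
    congr 1
  refine ⟨fun j => K.mulVec (fun i => (a j i : ℤ)), ?_, ?_, ?_, ?_⟩
  · simpa only [hc] using hali
  · intro n
    have : szvB Aq (szvc (K.mulVec (fun i => (a n i : ℤ))))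
      (szvc (K.mulVec (fun i => (a n i : ℤ)))) = 0 := by
      rw [hc, szvB_eq, hKr]; simp
    rw [hAq, szvB_cast] at this
    exact_mod_cast this
  · intro n
    rw [hc]; exact haP n
  · intro n i
    change |∑ j, K i j * (a n j : ℤ)| ≤ _
    push_cast
    apply szv_abs_sum_le _ _ _ (by positivity) (by simp)
    intro j
    rw [abs_mul]
    have h1 := hKb i j
    have h2 : |(a n j : ℤ)| ≤ (M : ℤ) + 1 := by
      have := hab n j
      rw [abs_of_nonneg (by positivity)]
      omega
    push_cast at h1
    exact mul_le_mul h1 h2 (abs_nonneg _) (by positivity)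

theorem szvX_bound {L : ℕ} (A : Matrix (Fin L) (Fin L) ℤ) (G Y d : ℤ)
    (hG : ∀ i j, |A i j| ≤ G)
    (y t : Fin L → ℤ) (hy : ∀ i, |y i| ≤ Y) (ht : ∀ i, |t i| ≤ d) (i : Fin L) :
    |szvX A y t i| ≤ 3 * L ^ 2 * G * d ^ 2 * Y := by
  have h1 := szvB_bound A G d d hG t t ht ht
  have h2 := szvB_bound A G d Y hG t y ht hy
  rw [Fintype.card_fin] at h1 h2
  have h3 := mul_le_mul h1 (hy i) (abs_nonneg _) ((abs_nonneg _).trans h1)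
  have h4 := mul_le_mul h2 (ht i) (abs_nonneg _) ((abs_nonneg _).trans h2)
  simp only [szvX, Pi.sub_apply, Pi.smul_apply, smul_eq_mul]
  refine (abs_sub _ _).trans ?_
  rw [abs_mul, abs_mul, abs_mul, abs_two]
  nlinarith

theorem szvX_cast {L : ℕ} (A : Matrix (Fin L) (Fin L) ℤ) (y t : Fin L → ℤ) :
    szvc (szvX A y t) = szvX (A.map (Int.cast : ℤ → ℚ)) (szvc y) (szvc t) := by
  funext i
  simp only [szvX, szvB_cast, szvc, Pi.sub_apply, Pi.smul_apply, smul_eq_mul]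
  push_cast
  rfl

theorem szv_two {L : ℕ} (u v : Fin L → ℚ) (hu : u ≠ 0) (hv : v ≠ 0) :
    ∃ t : Fin L → ℤ, (∀ i, |t i| ≤ 2) ∧ szvc t ⬝ᵥ u ≠ 0 ∧ szvc t ⬝ᵥ v ≠ 0 := by
  obtain ⟨i, hi⟩ := Function.ne_iff.mp hu
  obtain ⟨j, hj⟩ := Function.ne_iff.mp hv
  simp only [Pi.zero_apply] at hi hj
  have hs : ∀ i, szvc (Pi.single i 1 : Fin L → ℤ) = Pi.single i 1 := by
    intro i; funext k
    simp only [szvc, Pi.single_apply]; split_ifs <;> simp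
  have ha : szvc (Pi.single i 1 + Pi.single j 1 : Fin L → ℤ) = Pi.single i 1 + Pi.single j 1 := by
    rw [← hs i, ← hs j]; funext k; simp [szvc]
  have hb : ∀ i k, |(Pi.single i 1 : Fin L → ℤ) k| ≤ 1 := by
    intro i k; rw [Pi.single_apply]; split_ifs <;> simp
  by_cases h1 : v i = 0
  · by_cases h2 : u j = 0
    · refine ⟨Pi.single i 1 + Pi.single j 1, ?_, ?_, ?_⟩
      · intro k
        have := abs_add_le ((Pi.single i 1 : Fin L → ℤ) k) ((Pi.single j 1 : Fin L → ℤ) k)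
        have := hb i k
        have := hb j k
        rw [Pi.add_apply]; omega
      · rw [ha]; simpa [h2] using hi
      · rw [ha]; simpa [h1] using hj
    · exact ⟨Pi.single j 1, fun k => (hb j k).trans (by norm_num), by rw [hs]; simpa using h2,
        by rw [hs]; simpa using hj⟩
  · exact ⟨Pi.single i 1, fun k => (hb i k).trans (by norm_num), by rw [hs]; simpa using hi,
        by rw [hs]; simpa using h1⟩

theorem szv_poly_shift {L : ℕ} (P : MvPolynomial (Fin L) ℚ) (z y : Fin L → ℚ)
    (hP : MvPolynomial.eval z P ≠ 0) : ∃ s : ℚ, s ≠ 0 ∧ MvPolynomial.eval (z + s • y) P ≠ 0 := by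
  set p : Polynomial ℚ :=
    MvPolynomial.aeval (fun i => Polynomial.C (z i) + Polynomial.X * Polynomial.C (y i)) P with hp
  have he : ∀ s, p.eval s = MvPolynomial.eval (z + s • y) P := by
    intro s
    have h1 : (Polynomial.aeval s) p = MvPolynomial.aeval (fun i => z i + s * y i) P := by
      rw [hp, ← AlgHom.comp_apply, MvPolynomial.comp_aeval]
      congr 2
      funext i
      simp
      ring
    rw [Polynomial.coe_aeval_eq_eval] at h1
    rw [h1]
    rfl
  have hp0 : Polynomial.X * p ≠ 0 := by
    apply mul_ne_zero Polynomial.X_ne_zero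
    intro h
    apply hP
    have := he 0
    rw [h] at this
    simpa using this.symm
  by_contra! hcon
  apply hp0
  apply Polynomial.funext
  intro s
  by_cases hs : s = 0
  · simp [hs]
  · rw [Polynomial.eval_mul, he, hcon s hs]; simp

theorem szv_caseA {L : ℕ} (M : ℕ) (A : Matrix (Fin L) (Fin L) ℤ) (hA : ∀ i j, A i j = A j i)
    (G : ℕ) (hG1 : 1 ≤ G) (hG : ∀ i j, |A i j| ≤ G)
    (P : MvPolynomial (Fin L) ℚ) (hP : P.totalDegree ≤ M) (m : ℕ)
    (z : Fin L → ℚ) (hz : szvB (A.map (Int.cast : ℤ → ℚ)) z z = 0)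
    (hPz : MvPolynomial.eval z P ≠ 0)
    (W : Submodule ℚ (Fin L → ℚ)) (hWm : Module.finrank ℚ W = m)
    (hW : ∀ x ∈ W, ∀ y ∈ W, szvB (A.map (Int.cast : ℤ → ℚ)) x y = 0)
    (hmax : ∀ W : Submodule ℚ (Fin L → ℚ),
      (∀ x ∈ W, ∀ y ∈ W, szvB (A.map (Int.cast : ℤ → ℚ)) x y = 0) → Module.finrank ℚ W ≤ m)
    (hB : ∃ x, szvB (A.map (Int.cast : ℤ → ℚ)) x x = 0 ∧
      (A.map (Int.cast : ℤ → ℚ)).mulVec x ≠ 0) :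
    szvGood A P m (((3 * M + 3) * (3 * L ^ 2 * G * (3 * M + 3) ^ 2 *
      (3 * L ^ 2 * G * 2 ^ 2 * (L * (3 * L ^ 2 * G) ^ L))) : ℕ) : ℤ) := by
  obtain ⟨-, hsz⟩ := szv_proj A hA G hG1 hG
  obtain ⟨y0, hy0z, hy0r, hy0b⟩ := hsz hB
  set Aq := A.map (Int.cast : ℤ → ℚ) with hAq
  have hAqs : ∀ i j, Aq i j = Aq j i := by
    intro i j; simp [hAq, hA i j]
  have hy0zq : szvB Aq (szvc y0) (szvc y0) = 0 := by rw [hAq, szvB_cast, hy0z]; simp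
  have hy0rq : Aq.mulVec (szvc y0) ≠ 0 := by
    rw [hAq, szv_mulVec_cast]
    intro h
    apply hy0r
    apply szvc_inj
    rw [h]; funext i; simp [szvc]
  have hL : 1 ≤ L := by
    by_contra h
    have : L = 0 := by omega
    subst this
    apply hy0r; funext k; exact k.elim0
  -- make z nonradical
  obtain ⟨z, hz, hPz, hzr⟩ : ∃ z, szvB Aq z z = 0 ∧ MvPolynomial.eval z P ≠ 0 ∧
      Aq.mulVec z ≠ 0 := by
    by_cases h : Aq.mulVec z = 0
    · obtain ⟨s, hs, hs'⟩ := szv_poly_shift P z (szvc y0) hPz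
      refine ⟨z + s • szvc y0, ?_, hs', ?_⟩
      · have h1 : ∀ w, szvB Aq w z = 0 := by intro w; rw [szvB_eq, h]; simp
        have h2 : ∀ w, szvB Aq z w = 0 := by intro w; rw [szvB_comm Aq hAqs]; exact h1 w
        simp only [szvB_add_left, szvB_add_right, szvB_smul_left, szvB_smul_right, h1, h2, hy0zq]
        simp
      · rw [Matrix.mulVec_add, h, zero_add, Matrix.mulVec_smul]
        exact smul_ne_zero hs hy0rq
    · exact ⟨z, hz, hPz, h⟩
  -- small y
  set Y0 : ℤ := ((L * (3 * L ^ 2 * G) ^ L : ℕ) : ℤ) with hY0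
  have hY00 : 0 ≤ Y0 := by positivity
  set Y : ℤ := 3 * L ^ 2 * G * 2 ^ 2 * Y0 with hY
  have hYY : Y0 ≤ Y := by
    have h1 : (1 : ℤ) ≤ 3 * L ^ 2 * G * 2 ^ 2 := by
      have : 1 ≤ 3 * L ^ 2 * G * 2 ^ 2 := Nat.one_le_iff_ne_zero.mpr (by positivity)
      exact_mod_cast this
    rw [hY]; nlinarith
  obtain ⟨y, hyz, hyb, hyzz⟩ : ∃ y : Fin L → ℤ, szvB A y y = 0 ∧ (∀ i, |y i| ≤ Y) ∧
      szvB Aq z (szvc y) ≠ 0 := by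
    by_cases h : szvB Aq z (szvc y0) = 0
    · obtain ⟨t, htb, ht1, ht2⟩ := szv_two _ _ hy0rq hzr
      rw [← szvB_eq] at ht1 ht2
      refine ⟨szvX A y0 t, szvX_isotropic A hA y0 t hy0z, ?_, ?_⟩
      · intro i
        exact szvX_bound A G Y0 2 hG y0 t hy0b htb i
      · rw [szvX_cast, szvX, szvB_sub_right, szvB_smul_right, szvB_smul_right, h,
          szvB_comm Aq hAqs z]
        simp only [mul_zero, zero_sub, neg_ne_zero]
        exact mul_ne_zero (mul_ne_zero two_ne_zero ht1) ht2
    · exact ⟨y0, hy0z, fun i => (hy0b i).trans hYY, h⟩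
  have hyzq : szvB Aq (szvc y) (szvc y) = 0 := by rw [hAq, szvB_cast, hyz]; simp
  have hXw : ∀ w, szvB Aq w w = 0 → szvX Aq (szvc y) w = (- (2 * szvB Aq w (szvc y))) • w := by
    intro w hw
    rw [szvX, hw, zero_smul, zero_sub, neg_smul]
  -- good isotropic subspace
  obtain ⟨W', hW'm, hW', w2, hw2, hw2y⟩ : ∃ W' : Submodule ℚ (Fin L → ℚ),
      m ≤ Module.finrank ℚ W' ∧
      (∀ x ∈ W', ∀ y ∈ W', szvB Aq x y = 0) ∧ ∃ w ∈ W', szvB Aq w (szvc y) ≠ 0 := by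
    by_cases hWy : ∀ w ∈ W, szvB Aq w (szvc y) = 0
    · -- the functional of z
      let ℓ : (Fin L → ℚ) →ₗ[ℚ] ℚ :=
        { toFun := fun w => szvB Aq w z
          map_add' := fun a b => szvB_add_left _ _ _ _
          map_smul' := fun c a => szvB_smul_left _ _ _ _ }
      have hyW : szvc y ∈ W := by
        by_contra hyW
        have h1 := hmax (W ⊔ Submodule.span ℚ {szvc y}) (by
          intro a ha b hb
          obtain ⟨a1, ha1, a2, ha2, rfl⟩ := Submodule.mem_sup.mp ha
          obtain ⟨b1, hb1, b2, hb2, rfl⟩ := Submodule.mem_sup.mp hb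
          obtain ⟨c, rfl⟩ := Submodule.mem_span_singleton.mp ha2
          obtain ⟨d, rfl⟩ := Submodule.mem_span_singleton.mp hb2
          simp only [szvB_add_left, szvB_add_right, szvB_smul_left, szvB_smul_right, hyzq,
            hW a1 ha1 b1 hb1, hWy a1 ha1, szvB_comm Aq hAqs (szvc y) b1, hWy b1 hb1]
          simp)
        have h2 : W < W ⊔ Submodule.span ℚ {szvc y} := by
          refine lt_of_le_of_ne le_sup_left fun h => hyW ?_
          rw [h]
          exact Submodule.mem_sup_right (Submodule.mem_span_singleton_self _)
        have := Submodule.finrank_lt_finrank_of_lt h2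
        omega
      set W0 := W ⊓ LinearMap.ker ℓ with hW0
      have hW0z : ∀ w ∈ W0, szvB Aq w z = 0 := fun w hw => LinearMap.mem_ker.mp hw.2
      have hW0m : m ≤ Module.finrank ℚ W0 + 1 := by
        have h1 := Submodule.finrank_sup_add_finrank_inf_eq W (LinearMap.ker ℓ)
        have h2 := LinearMap.finrank_range_add_finrank_ker ℓ
        have h3 : Module.finrank ℚ (LinearMap.range ℓ) ≤ 1 := by
          have := Submodule.finrank_le (LinearMap.range ℓ)
          simpa using this
        have h4 := Submodule.finrank_le (W ⊔ LinearMap.ker ℓ)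
        rw [← hW0] at h1
        omega
      have hzW0 : z ∉ W0 := by
        intro hzW
        exact hyzz (hWy z hzW.1)
      refine ⟨W0 ⊔ Submodule.span ℚ {z}, ?_, ?_, z,
        Submodule.mem_sup_right (Submodule.mem_span_singleton_self _), hyzz⟩
      · have h2 : W0 < W0 ⊔ Submodule.span ℚ {z} := by
          refine lt_of_le_of_ne le_sup_left fun h => hzW0 ?_
          rw [h]
          exact Submodule.mem_sup_right (Submodule.mem_span_singleton_self _)
        have := Submodule.finrank_lt_finrank_of_lt h2
        omega
      · intro a ha b hb
        obtain ⟨a1, ha1, a2, ha2, rfl⟩ := Submodule.mem_sup.mp ha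
        obtain ⟨b1, hb1, b2, hb2, rfl⟩ := Submodule.mem_sup.mp hb
        obtain ⟨c, rfl⟩ := Submodule.mem_span_singleton.mp ha2
        obtain ⟨d, rfl⟩ := Submodule.mem_span_singleton.mp hb2
        simp only [szvB_add_left, szvB_add_right, szvB_smul_left, szvB_smul_right, hz,
            hW a1 ha1.1 b1 hb1.1, hW0z a1 ha1, szvB_comm Aq hAqs z b1, hW0z b1 hb1]
        simp
    · push Not at hWy
      exact ⟨W, hWm.ge, hW, hWy⟩
  -- selection
  let ev : (Option (Fin L) → ℚ) → (Fin L → ℚ) := fun a =>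
    a none • szvX Aq (szvc y) (fun i => a (some i))
  have hevw : ∀ w, szvB Aq w w = 0 → szvB Aq w (szvc y) ≠ 0 → ∃ a, ev a = w := by
    intro w hw hwy
    refine ⟨fun o => o.elim ((- (2 * szvB Aq w (szvc y)))⁻¹) w, ?_⟩
    simp only [ev, Option.elim]
    rw [hXw w hw, smul_smul, inv_mul_cancel₀, one_smul]
    simpa using hwy
  obtain ⟨a, hab, hali, haP⟩ := szv_select (σ := Option (Fin L))
    (fun k => MvPolynomial.X none * ((∑ i, ∑ j, MvPolynomial.C (Aq i j) *
        (MvPolynomial.X (some i) * MvPolynomial.X (some j))) * MvPolynomial.C (szvc y k) -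
      (∑ i, ∑ j, MvPolynomial.C (2 * Aq i j * szvc y j) * MvPolynomial.X (some i)) *
        MvPolynomial.X (some k))) 3 M
    (by
      intro k
      refine (MvPolynomial.totalDegree_mul _ _).trans ?_
      rw [MvPolynomial.totalDegree_X]
      have h1 : (∑ i, ∑ j, MvPolynomial.C (Aq i j) *
        (MvPolynomial.X (some i) * MvPolynomial.X (some j) :
          MvPolynomial (Option (Fin L)) ℚ)).totalDegree ≤ 2 := by
        apply MvPolynomial.totalDegree_finsetSum_le
        intro i _
        apply MvPolynomial.totalDegree_finsetSum_le
        intro j _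
        refine (MvPolynomial.totalDegree_mul _ _).trans ?_
        rw [MvPolynomial.totalDegree_C]
        have := MvPolynomial.totalDegree_mul (MvPolynomial.X (some i) :
          MvPolynomial (Option (Fin L)) ℚ) (MvPolynomial.X (some j))
        simp only [MvPolynomial.totalDegree_X] at this
        omega
      have h2 : (∑ i, ∑ j, MvPolynomial.C (2 * Aq i j * szvc y j) *
        (MvPolynomial.X (some i) : MvPolynomial (Option (Fin L)) ℚ)).totalDegree ≤ 1 := by
        apply MvPolynomial.totalDegree_finsetSum_le
        intro i _
        apply MvPolynomial.totalDegree_finsetSum_le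
        intro j _
        refine (MvPolynomial.totalDegree_mul _ _).trans ?_
        rw [MvPolynomial.totalDegree_C, MvPolynomial.totalDegree_X]
      have h3 := MvPolynomial.totalDegree_sub (((∑ i, ∑ j, MvPolynomial.C (Aq i j) *
        (MvPolynomial.X (some i) * MvPolynomial.X (some j))) * MvPolynomial.C (szvc y k) :
          MvPolynomial (Option (Fin L)) ℚ))
        ((∑ i, ∑ j, MvPolynomial.C (2 * Aq i j * szvc y j) * MvPolynomial.X (some i)) *
        MvPolynomial.X (some k))
      have h4 := MvPolynomial.totalDegree_mul (∑ i, ∑ j, MvPolynomial.C (Aq i j) *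
        (MvPolynomial.X (some i) * MvPolynomial.X (some j) :
          MvPolynomial (Option (Fin L)) ℚ)) (MvPolynomial.C (szvc y k))
      have h5 := MvPolynomial.totalDegree_mul (∑ i, ∑ j, MvPolynomial.C (2 * Aq i j * szvc y j) *
        (MvPolynomial.X (some i) : MvPolynomial (Option (Fin L)) ℚ)) (MvPolynomial.X (some k))
      rw [MvPolynomial.totalDegree_C] at h4
      rw [MvPolynomial.totalDegree_X] at h5
      have h6 := h3.trans (max_le (h4.trans (by omega : _ ≤ 2)) (h5.trans (by omega : _ ≤ 2)))
      omega) P hP ev (by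
        intro a k
        simp only [ev, szvX, szvB, Pi.smul_apply, Pi.sub_apply, smul_eq_mul, map_mul, map_sub,
          map_sum, MvPolynomial.eval_X, MvPolynomial.eval_C]
        congr 2
        · congr 1
          exact Finset.sum_congr rfl fun i _ => Finset.sum_congr rfl fun j _ => by ring
        · congr 1
          rw [Finset.mul_sum]
          refine Finset.sum_congr rfl fun i _ => ?_
          rw [Finset.mul_sum]
          refine Finset.sum_congr rfl fun j _ => ?_
          ring)
    (by
      obtain ⟨a, ha⟩ := hevw z hz hyzz
      exact ⟨a, by rw [ha]; exact hPz⟩) m (by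
      intro U hU
      have hnot : ¬ W' ≤ U := by
        intro h
        have := Submodule.finrank_mono h
        omega
      obtain ⟨w1, hw1, hw1U⟩ := SetLike.not_le_iff_exists.mp hnot
      obtain ⟨w, hw, hwU, hwy⟩ : ∃ w ∈ W', w ∉ U ∧ szvB Aq w (szvc y) ≠ 0 := by
        by_cases h1 : szvB Aq w1 (szvc y) = 0
        · by_cases h2 : w2 ∈ U
          · refine ⟨w1 + w2, W'.add_mem hw1 hw2, fun h => hw1U ?_, ?_⟩
            · exact (Submodule.add_mem_iff_left U h2).mp h
            · rw [szvB_add_left, h1, zero_add]; exact hw2y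
          · exact ⟨w2, hw2, h2, hw2y⟩
        · exact ⟨w1, hw1, hw1U, h1⟩
      obtain ⟨a, ha⟩ := hevw w (hW' w hw w hw) hwy
      exact ⟨a, by rw [ha]; exact hwU⟩) m le_rfl
  have hc : ∀ n, szvc ((a n none : ℤ) • szvX A y (fun i => (a n (some i) : ℤ))) =
      ev (fun i => (a n i : ℚ)) := by
    intro n
    have h1 := szvX_cast A y (fun i => (a n (some i) : ℤ))
    have h2 : szvc (fun i => (a n (some i) : ℤ)) = fun i => (a n (some i) : ℚ) := by
      funext i; simp [szvc]
    rw [h2] at h1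
    rw [← hAq] at h1
    simp only [ev]
    rw [← h1]
    funext i
    simp [szvc]
  refine ⟨fun n => (a n none : ℤ) • szvX A y (fun i => (a n (some i) : ℤ)), ?_, ?_, ?_, ?_⟩
  · simpa only [hc] using hali
  · intro n
    rw [szvB_smul_left, szvB_smul_right, szvX_isotropic A hA _ _ hyz]
    simp
  · intro n
    rw [hc]; exact haP n
  · intro n i
    have hab' : ∀ o, |(a n o : ℤ)| ≤ 3 * (M : ℤ) + 3 := by
      intro o
      have := hab n o
      rw [abs_of_nonneg (by positivity)]
      omega
    have h1 := szvX_bound A G Y (3 * M + 3) hG y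
      (fun i => (a n (some i) : ℤ)) hyb (fun i => hab' _) i
    change |(a n none : ℤ) * szvX A y (fun i => (a n (some i) : ℤ)) i| ≤ _
    rw [abs_mul]
    have h2 := mul_le_mul (hab' none) h1 (abs_nonneg _) (by positivity)
    refine h2.trans (le_of_eq ?_)
    rw [hY, hY0]
    push_cast
    ring

theorem szv_core (L M : ℕ) : ∃ C : ℕ, ∀ (A : Matrix (Fin L) (Fin L) ℤ), (∀ i j, A i j = A j i) →
    ∀ (G : ℕ), 1 ≤ G → (∀ i j, |A i j| ≤ G) →
    ∀ (P : MvPolynomial (Fin L) ℚ), P.totalDegree ≤ M → ∀ (m : ℕ)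
    (z : Fin L → ℚ), szvB (A.map (Int.cast : ℤ → ℚ)) z z = 0 →
    MvPolynomial.eval z P ≠ 0 →
    ∀ (W : Submodule ℚ (Fin L → ℚ)), Module.finrank ℚ W = m →
    (∀ x ∈ W, ∀ y ∈ W, szvB (A.map (Int.cast : ℤ → ℚ)) x y = 0) →
    (∀ W : Submodule ℚ (Fin L → ℚ),
      (∀ x ∈ W, ∀ y ∈ W, szvB (A.map (Int.cast : ℤ → ℚ)) x y = 0) → Module.finrank ℚ W ≤ m) →
    szvGood A P m ((C * G ^ (L + 2) : ℕ) : ℤ) := by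
  set C1 := L * (((L ^ 2 + 1) * L.factorial) * (M + 1)) with hC1
  set C2 := (3 * M + 3) * (3 * L ^ 2 * (3 * M + 3) ^ 2 *
      (3 * L ^ 2 * 2 ^ 2 * (L * (3 * L ^ 2) ^ L))) with hC2
  refine ⟨C1 + C2, ?_⟩
  intro A hA G hG1 hG P hP m z hz hPz W hWm hW hmax
  have hmono : ∀ X : ℕ, X ≤ (C1 + C2) * G ^ (L + 2) → szvGood A P m (X : ℤ) →
      szvGood A P m (((C1 + C2) * G ^ (L + 2) : ℕ) : ℤ) := by
    rintro X hX ⟨x, h1, h2, h3, h4⟩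
    exact ⟨x, h1, h2, h3, fun n i => (h4 n i).trans (by exact_mod_cast hX)⟩
  by_cases hB : ∀ x, szvB (A.map (Int.cast : ℤ → ℚ)) x x = 0 →
      (A.map (Int.cast : ℤ → ℚ)).mulVec x = 0
  · refine hmono _ ?_ (szv_caseB M A hA G hG1 hG P hP m z hz hPz W hWm hW hB)
    calc L * (((L ^ 2 + 1) * L.factorial * G ^ (L + 1)) * (M + 1)) = C1 * G ^ (L + 1) := by
          rw [hC1]; ring
      _ ≤ C1 * G ^ (L + 2) := by gcongr <;> omega
      _ ≤ _ := Nat.mul_le_mul_right _ (by omega)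
  · push Not at hB
    refine hmono _ ?_ (szv_caseA M A hA G hG1 hG P hP m z hz hPz W hWm hW hmax hB)
    calc _ = C2 * G ^ (L + 2) := by
          rw [hC2, mul_pow]; ring
      _ ≤ _ := Nat.mul_le_mul_right _ (by omega)

theorem szv_prod_ge {κ : Type*} (t : Finset κ) (μ : κ → ℝ) (h : ∀ k, 1 ≤ μ k) :
    1 + ∑ k ∈ t, (μ k - 1) ≤ ∏ k ∈ t, μ k := by
  classical
  induction t using Finset.induction_on with
  | empty => simp
  | insert a t ha ih =>
    rw [Finset.sum_insert ha, Finset.prod_insert ha]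
    have h1 := h a
    have h2 : 0 ≤ ∑ k ∈ t, (μ k - 1) := Finset.sum_nonneg fun k _ => by linarith [h k]
    nlinarith

theorem szv_det_ge {L : ℕ} (A : Matrix (Fin L) (Fin L) ℝ) (hA : A.IsHermitian)
    (h : ∀ u : Fin L → ℝ, u ⬝ᵥ u ≤ u ⬝ᵥ (A.mulVec u)) (i : Fin L) : A i i ≤ A.det := by
  have hμ : ∀ k, 1 ≤ hA.eigenvalues k := by
    intro k
    rw [hA.eigenvalues_eq k]
    have h1 := h (hA.eigenvectorBasis k).ofLp
    have h2 : (hA.eigenvectorBasis k).ofLp ⬝ᵥ (hA.eigenvectorBasis k).ofLp = 1 := by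
      have h3 := hA.eigenvectorBasis.orthonormal.1 k
      rw [EuclideanSpace.norm_eq, Real.sqrt_eq_one] at h3
      simpa [dotProduct, sq] using h3
    simp only [star_trivial, RCLike.re_to_real]
    linarith
  have hdet := hA.det_eq_prod_eigenvalues
  have htr := hA.trace_eq_sum_eigenvalues
  have hp := szv_prod_ge Finset.univ hA.eigenvalues hμ
  simp only [RCLike.ofReal_real_eq_id, id] at hdet htr
  rw [hdet]
  refine le_trans ?_ hp
  rw [Finset.sum_sub_distrib, ← htr, Matrix.trace, ← Finset.sum_sub_distrib]
  have hd : ∀ j, 0 ≤ A j j - 1 := by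
    intro j
    have := h (Pi.single j 1)
    simp at this
    linarith
  have := Finset.single_le_sum (f := fun j => A j j - 1) (fun j _ => hd j) (Finset.mem_univ i)
  simp only [Matrix.diag_apply]
  linarith

theorem szv_rows {L N : ℕ} (B : Matrix (Fin L) (Fin N) ℤ) (s : Fin L → Fin N)
    (hs : Function.Injective s) (hD : (B.submatrix id s).det ≠ 0) (i : Fin L) :
    ∑ j, ((B.submatrix id s).adjugate * B) i j ^ 2 ≤ (B * B.transpose).det := by
  set S := B.submatrix id s with hS
  set v := S.adjugate * B with hv
  set D := S.det with hDd
  have hvS : ∀ a b, v a (s b) = if a = b then D else 0 := by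
    intro a b
    have h1 : v a (s b) = (S.adjugate * S) a b := rfl
    rw [h1, Matrix.adjugate_mul, Matrix.smul_apply, Matrix.one_apply]
    simp [hDd]
  have hdet : (v * v.transpose).det * D ^ 2 = D ^ (2 * L) * (B * B.transpose).det := by
    have h1 : v * v.transpose = S.adjugate * (B * B.transpose) * S.adjugate.transpose := by
      rw [hv, Matrix.transpose_mul]; simp only [Matrix.mul_assoc]
    have h2 : S.adjugate.det * D = D ^ L := by
      rw [hDd, ← Matrix.det_mul, Matrix.adjugate_mul, Matrix.det_smul]; simp
    rw [h1, Matrix.det_mul, Matrix.det_mul, Matrix.det_transpose]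
    calc _ = (S.adjugate.det * D) ^ 2 * (B * B.transpose).det := by ring
      _ = _ := by rw [h2]; ring
  have hDr : (D : ℝ) ≠ 0 := by exact_mod_cast hD
  set vr : Matrix (Fin L) (Fin N) ℝ := v.map (Int.cast : ℤ → ℝ) with hvr
  set A : Matrix (Fin L) (Fin L) ℝ := ((D : ℝ) ^ 2)⁻¹ • (vr * vr.transpose) with hAd
  have hAh : A.IsHermitian := by
    rw [Matrix.IsHermitian, hAd]
    simp [Matrix.conjTranspose_eq_transpose_of_trivial]
  have hAu : ∀ u : Fin L → ℝ, u ⬝ᵥ u ≤ u ⬝ᵥ (A.mulVec u) := by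
    intro u
    rw [hAd, Matrix.smul_mulVec, dotProduct_smul, ← Matrix.mulVec_mulVec,
      Matrix.dotProduct_mulVec, Matrix.mulVec_transpose, smul_eq_mul]
    have h1 : ∑ b, (Matrix.vecMul u vr (s b)) ^ 2 ≤ ∑ j, (Matrix.vecMul u vr j) ^ 2 := by
      rw [← Finset.sum_image (s := Finset.univ) (g := s) (f := fun j => (Matrix.vecMul u vr j) ^ 2)
        (fun a _ b _ h => hs h)]
      exact Finset.sum_le_sum_of_subset_of_nonneg (Finset.subset_univ _) fun j _ _ => sq_nonneg _
    have h2 : ∀ b, Matrix.vecMul u vr (s b) = D * u b := by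
      intro b
      simp only [Matrix.vecMul, dotProduct, hvr, Matrix.map_apply, hvS]
      simp [mul_comm]
    simp only [h2] at h1
    have h3 : Matrix.vecMul u vr ⬝ᵥ Matrix.vecMul u vr = ∑ j, (Matrix.vecMul u vr j) ^ 2 := by
      simp [dotProduct, sq]
    have h4 : u ⬝ᵥ u = ((D : ℝ) ^ 2)⁻¹ * ∑ b, (D * u b) ^ 2 := by
      simp only [dotProduct, mul_pow, ← Finset.mul_sum]
      rw [inv_mul_cancel_left₀ (pow_ne_zero 2 hDr)]
      simp [sq]
    rw [h3, h4]
    gcongr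
  have hfin := szv_det_ge A hAh hAu i
  have hAdet : A.det = ((D : ℝ) ^ 2)⁻¹ * ((B * B.transpose).det : ℤ) := by
    rw [hAd, Matrix.det_smul, Fintype.card_fin]
    have h1 : (vr * vr.transpose).det = ((v * v.transpose).det : ℤ) := by
      have : vr * vr.transpose = (Int.castRingHom ℝ).mapMatrix (v * v.transpose) := by
        ext a b; simp [Matrix.mul_apply, hvr]
      rw [this, ← RingHom.map_det]; rfl
    rw [h1]
    have h2 : (((v * v.transpose).det : ℤ) : ℝ) * (D : ℝ) ^ 2 = (D : ℝ) ^ (2 * L) * ((B * B.transpose).det : ℤ) := by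
      exact_mod_cast hdet
    rw [pow_mul] at h2
    rw [inv_pow]
    have h3 : ((D : ℝ) ^ 2) ^ L ≠ 0 := pow_ne_zero _ (pow_ne_zero _ hDr)
    have h4 : (D : ℝ) ^ 2 ≠ 0 := pow_ne_zero _ hDr
    rw [inv_mul_eq_div, inv_mul_eq_div, div_eq_div_iff h3 h4, h2, mul_comm]
  have hAii : A i i = ((D : ℝ) ^ 2)⁻¹ * ((∑ j, v i j ^ 2 : ℤ) : ℝ) := by
    rw [hAd, Matrix.smul_apply, Matrix.mul_apply, smul_eq_mul]
    simp [hvr, sq]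
  rw [hAdet, hAii] at hfin
  have h5 := le_of_mul_le_mul_left hfin (by positivity)
  exact_mod_cast h5

def szvIsB {N L : ℕ} (V : Submodule ℚ (Fin N → ℚ)) (B : Matrix (Fin L) (Fin N) ℤ) : Prop :=
  ∀ z : Fin N → ℤ, ((fun i => (z i : ℚ)) ∈ V) ↔ ∃ c : Fin L → ℤ, ∀ j, z j = ∑ i, c i * B i j

theorem szv_span_of {N : ℕ} {κ : Type*} [Fintype κ] (V : Submodule ℚ (Fin N → ℚ)) (b : κ → Fin N → ℤ)
    (hb : ∀ z : Fin N → ℤ, szvc z ∈ V ↔ ∃ c : κ → ℤ, ∀ j, z j = ∑ i, c i * b i j) :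
    Submodule.span ℚ (Set.range fun i => szvc (b i)) = V := by
  classical
  apply le_antisymm
  · rw [Submodule.span_le]
    rintro _ ⟨i, rfl⟩
    refine (hb (b i)).2 ⟨Pi.single i 1, fun j => ?_⟩
    rw [Finset.sum_eq_single i]
    · simp
    · intro k _ hk; simp [hk]
    · simp
  · intro x hx
    obtain ⟨c, y, hc, hy⟩ := szv_clear x
    have hcq : (c : ℚ) ≠ 0 := by exact_mod_cast hc
    obtain ⟨d, hd⟩ := (hb y).1 (by rw [hy]; exact V.smul_mem _ hx)
    have h1 : x = (c : ℚ)⁻¹ • ∑ i, (d i : ℚ) • szvc (b i) := by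
      rw [eq_inv_smul_iff₀ hcq, ← hy]
      funext j
      simp [szvc, hd j]
    rw [h1]
    exact Submodule.smul_mem _ _ (Submodule.sum_mem _ fun i _ =>
      Submodule.smul_mem _ _ (Submodule.subset_span ⟨i, rfl⟩))

theorem szv_exB {N L : ℕ} (V : Submodule ℚ (Fin N → ℚ)) (hV : Module.finrank ℚ V = L) :
    ∃ B : Matrix (Fin L) (Fin N) ℤ, szvIsB V B := by
  set cm : (Fin N → ℤ) →ₗ[ℤ] (Fin N → ℚ) :=
    { toFun := szvc
      map_add' := fun x y => by funext i; simp [szvc]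
      map_smul' := fun c x => by funext i; simp [szvc] } with hcm
  set Λ := (V.restrictScalars ℤ).comap cm with hΛ
  have hmem : ∀ z, z ∈ Λ ↔ szvc z ∈ V := fun z => Iff.rfl
  set b := Module.finBasis ℤ Λ with hb
  set n := Module.finrank ℤ Λ with hn
  set r : Fin n → Fin N → ℤ := fun i => (b i : Fin N → ℤ) with hr
  have hB : ∀ z : Fin N → ℤ, szvc z ∈ V ↔ ∃ c : Fin n → ℤ, ∀ j, z j = ∑ i, c i * r i j := by
    intro z
    constructor
    · intro hz
      refine ⟨fun i => b.repr ⟨z, hz⟩ i, fun j => ?_⟩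
      have h1 := congrArg (fun w : Λ => (w : Fin N → ℤ) j) (b.sum_repr ⟨z, hz⟩)
      simp only [Submodule.coe_sum, Finset.sum_apply, Submodule.coe_smul, Pi.smul_apply,
        smul_eq_mul] at h1
      exact h1.symm
    · rintro ⟨c, hc⟩
      rw [← hmem]
      have : z = ∑ i, c i • r i := by funext j; simp [hc j]
      rw [this]
      exact Submodule.sum_mem _ fun i _ => Submodule.smul_mem _ _ (b i).2
  have hli : LinearIndependent ℚ fun i => szvc (r i) := by
    rw [Fintype.linearIndependent_iff]
    intro c hc
    obtain ⟨k, d, hk, hd⟩ := szv_clear c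
    have hkq : (k : ℚ) ≠ 0 := by exact_mod_cast hk
    have h1 : ∑ i, d i • b i = 0 := by
      apply Subtype.ext
      apply szvc_inj
      have h2 : szvc ((∑ i, d i • b i : Λ) : Fin N → ℤ) = (k : ℚ) • ∑ i, c i • szvc (r i) := by
        funext j
        have h3 : ∀ i, (d i : ℚ) = k * c i := fun i => congrFun hd i
        simp [szvc, h3, hr, Finset.mul_sum, mul_assoc]
      rw [h2, hc]
      funext j; simp [szvc]
    have h4 := (Fintype.linearIndependent_iff.1 b.linearIndependent) d h1
    intro i
    have h3 : (d i : ℚ) = k * c i := congrFun hd i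
    rw [h4 i] at h3
    simpa [hkq] using h3.symm
  have hsp := szv_span_of V r hB
  have hnL : n = L := by
    rw [← hV, ← hsp, finrank_span_eq_card hli]; simp
  clear_value n
  subst hnL
  exact ⟨r, hB⟩

theorem szv_cols {N L : ℕ} (B : Matrix (Fin L) (Fin N) ℤ)
    (h : LinearIndependent ℚ fun i => szvc (B i)) :
    ∃ s : Fin L → Fin N, Function.Injective s ∧ (B.submatrix id s).det ≠ 0 := by
  classical
  set Bq : Matrix (Fin L) (Fin N) ℚ := B.map (Int.cast : ℤ → ℚ) with hBq
  have hr : Bq.rank = L := by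
    have := LinearIndependent.rank_matrix (M := Bq) h
    simpa using this
  obtain ⟨κ, a, ha, hsp, hli⟩ := exists_linearIndependent' ℚ Bq.col
  have : Finite κ := Finite.of_injective a ha
  have : Fintype κ := Fintype.ofFinite κ
  have hc : Fintype.card κ = L := by
    rw [← finrank_span_eq_card hli, hsp, ← Matrix.rank_eq_finrank_span_cols, hr]
  have e : Fin L ≃ κ := (Fintype.equivFinOfCardEq hc).symm
  refine ⟨a ∘ e, ha.comp e.injective, ?_⟩
  have h2 : LinearIndependent ℚ (Bq.submatrix id (a ∘ e)).col := hli.comp e e.injective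
  rw [Matrix.linearIndependent_cols_iff_isUnit, Matrix.isUnit_iff_isUnit_det] at h2
  have h3 : (Bq.submatrix id (a ∘ e)).det = ((B.submatrix id (a ∘ e)).det : ℤ) := by
    have : Bq.submatrix id (a ∘ e) = (Int.castRingHom ℚ).mapMatrix (B.submatrix id (a ∘ e)) := rfl
    rw [this, ← RingHom.map_det]; rfl
  intro h4
  rw [h3, h4] at h2
  simp at h2

theorem szv_lattice {N L : ℕ} (hL : 1 ≤ L) (V : Submodule ℚ (Fin N → ℚ))
    (hV : Module.finrank ℚ V = L) :
    ∃ (v : Fin L → Fin N → ℤ) (K : ℕ), LinearIndependent ℚ (fun i => szvc (v i)) ∧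
      Submodule.span ℚ (Set.range fun i => szvc (v i)) = V ∧ 1 ≤ K ∧
      (∀ i, ∑ j, |v i j| ≤ K) ∧ subHeight N L V = Real.sqrt K := by
  classical
  have key : ∀ B : Matrix (Fin L) (Fin N) ℤ, szvIsB V B →
      ∃ (v : Fin L → Fin N → ℤ), LinearIndependent ℚ (fun i => szvc (v i)) ∧
      Submodule.span ℚ (Set.range fun i => szvc (v i)) = V ∧
      (∀ i, ∑ j, |v i j| ≤ (B * B.transpose).det) ∧ 1 ≤ (B * B.transpose).det := by
    intro B hB
    have hsp := szv_span_of V (fun i => B i) hB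
    have hli : LinearIndependent ℚ fun i => szvc (B i) := by
      rw [linearIndependent_iff_card_eq_finrank_span, Set.finrank, hsp, hV]; simp
    obtain ⟨s, hs, hD⟩ := szv_cols B hli
    have hrow := szv_rows B s hs hD
    set v := (B.submatrix id s).adjugate * B with hv
    have hDq : (((B.submatrix id s).det : ℤ) : ℚ) ≠ 0 := by exact_mod_cast hD
    have hvV : ∀ i, szvc (v i) ∈ V := by
      intro i
      exact (hB (v i)).2 ⟨fun k => (B.submatrix id s).adjugate i k, fun j => by
        rw [hv, Matrix.mul_apply]⟩
    have hsp2 : Submodule.span ℚ (Set.range fun i => szvc (v i)) = V := by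
      apply le_antisymm
      · rw [Submodule.span_le]; rintro _ ⟨i, rfl⟩; exact hvV i
      · rw [← hsp, Submodule.span_le]
        rintro _ ⟨i, rfl⟩
        have h1 : szvc (B i) = (((B.submatrix id s).det : ℤ) : ℚ)⁻¹ •
            ∑ k, ((B (i) (s k) : ℤ) : ℚ) • szvc (v k) := by
          rw [eq_inv_smul_iff₀ hDq]
          have h2 : (B.submatrix id s) * v = (B.submatrix id s).det • B := by
            rw [hv, ← Matrix.mul_assoc, Matrix.mul_adjugate, Matrix.smul_mul, Matrix.one_mul]
          funext j
          have h3 := congrFun (congrFun h2 i) j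
          rw [Matrix.mul_apply] at h3
          have h4 := congrArg (Int.cast : ℤ → ℚ) h3
          simp [szvc] at h4 ⊢
          exact h4.symm
        show szvc (B i) ∈ _
        rw [h1]
        exact Submodule.smul_mem _ _ (Submodule.sum_mem _ fun i _ =>
          Submodule.smul_mem _ _ (Submodule.subset_span ⟨i, rfl⟩))
    have hli2 : LinearIndependent ℚ fun i => szvc (v i) := by
      rw [linearIndependent_iff_card_eq_finrank_span, Set.finrank, hsp2, hV]; simp
    have hb : ∀ i, ∑ j, |v i j| ≤ (B * B.transpose).det := by
      intro i
      refine le_trans (Finset.sum_le_sum fun j _ => ?_) (hrow i)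
      rw [← sq_abs]
      rcases (abs_nonneg (v i j)).eq_or_lt with h | h
      · rw [← h]; simp
      · nlinarith
    refine ⟨v, hli2, hsp2, hb, ?_⟩
    have i0 : Fin L := ⟨0, hL⟩
    have h5 := hli2.ne_zero i0
    have h6 : ∃ j, v i0 j ≠ 0 := by
      by_contra! hcon
      apply h5; funext j; simp [szvc, hcon j]
    obtain ⟨j, hj⟩ := h6
    have h7 : |v i0 j| ≤ ∑ j, |v i0 j| :=
      Finset.single_le_sum (f := fun j => |v i0 j|) (fun j _ => abs_nonneg _) (Finset.mem_univ j)
    have h8 := Int.one_le_abs hj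
    linarith [hb i0]
  have hne : {n : ℕ | ∃ B : Matrix (Fin L) (Fin N) ℤ, szvIsB V B ∧
      n = (B * B.transpose).det.toNat}.Nonempty := by
    obtain ⟨B, hB⟩ := szv_exB V hV
    exact ⟨_, B, hB, rfl⟩
  obtain ⟨B, hB, hK⟩ := Nat.sInf_mem hne
  obtain ⟨v, h1, h2, h3, h4⟩ := key B hB
  have hKd : (((B * B.transpose).det.toNat : ℕ) : ℤ) = (B * B.transpose).det :=
    Int.toNat_of_nonneg (by linarith)
  refine ⟨v, (B * B.transpose).det.toNat, h1, h2, ?_, ?_, ?_⟩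
  · zify; rw [hKd]; exact h4
  · rw [hKd]; exact h3
  · apply IsLeast.csInf_eq
    constructor
    · refine ⟨B, hB, ?_⟩
      congr 1
      exact_mod_cast hKd
    · rintro r ⟨B', hB', rfl⟩
      apply Real.sqrt_le_sqrt
      have h5 : (B * B.transpose).det.toNat ≤ (B' * B'.transpose).det.toNat := by
        rw [← hK]; exact Nat.sInf_le ⟨B', hB', rfl⟩
      obtain ⟨_, _, _, _, h4'⟩ := key B' hB'
      have h6 : (((B' * B'.transpose).det.toNat : ℕ) : ℤ) = (B' * B'.transpose).det :=
        Int.toNat_of_nonneg (by linarith)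
      have h7 : (((B * B.transpose).det.toNat : ℕ) : ℤ) ≤ (B' * B'.transpose).det := by
        rw [← h6]; exact_mod_cast h5
      exact_mod_cast h7

theorem szv_ph {ι : Type*} [Fintype ι] (x : ι → ℚ) (hx : x ≠ 0) :
    ∃ (y : ι → ℤ) (c : ℚ), c ≠ 0 ∧ (∀ i, (y i : ℚ) = c * x i) ∧
      (∀ i, |y i| ≤ projHeight x) ∧ 1 ≤ projHeight x := by
  have hne : {m : ℕ | ∃ y : ι → ℤ,
    (∃ c : ℚ, c ≠ 0 ∧ ∀ i, (y i : ℚ) = c * x i) ∧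
    Finset.univ.gcd y = 1 ∧ m = Finset.univ.sup fun i => (y i).natAbs}.Nonempty := by
    obtain ⟨c, y, hc, hy⟩ := szv_clear x
    have hcq : (c : ℚ) ≠ 0 := by exact_mod_cast hc
    have hy1 : ∀ i, (y i : ℚ) = c * x i := fun i => congrFun hy i
    obtain ⟨i0, hi0⟩ := Function.ne_iff.1 hx
    have hyi0 : y i0 ≠ 0 := by
      intro h
      have := hy1 i0
      rw [h] at this
      simp [hcq] at this
      exact hi0 this
    obtain ⟨g, hg, hg1⟩ := Finset.extract_gcd y (s := Finset.univ) ⟨i0, Finset.mem_univ _⟩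
    have hG0 : Finset.univ.gcd y ≠ 0 := by
      intro h
      exact hyi0 (Finset.gcd_eq_zero_iff.1 h i0 (Finset.mem_univ _))
    have hG0q : ((Finset.univ.gcd y : ℤ) : ℚ) ≠ 0 := by exact_mod_cast hG0
    refine ⟨_, g, ⟨c / (Finset.univ.gcd y : ℤ), div_ne_zero hcq hG0q, fun i => ?_⟩, hg1, rfl⟩
    have h1 := hy1 i
    rw [hg i (Finset.mem_univ _)] at h1
    push_cast at h1
    field_simp
    linarith
  obtain ⟨y, ⟨c, hc, hyc⟩, hg, hm⟩ := Nat.sInf_mem hne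
  change projHeight x = _ at hm
  have hb : ∀ i, (y i).natAbs ≤ projHeight x := by
    intro i
    rw [hm]
    exact Finset.le_sup (f := fun i => (y i).natAbs) (Finset.mem_univ i)
  refine ⟨y, c, hc, hyc, fun i => ?_, ?_⟩
  · rw [Int.abs_eq_natAbs]; exact_mod_cast hb i
  · by_contra h
    have h0 : projHeight x = 0 := by omega
    have : Finset.univ.gcd y = 0 := by
      rw [Finset.gcd_eq_zero_iff]
      intro i _
      have := hb i
      rw [h0] at this
      omega
    rw [this] at hg
    exact zero_ne_one hg

theorem szv_ih {N : ℕ} (x : Fin N → ℤ) (X : ℕ) (hX : 1 ≤ X) (h : ∀ i, |x i| ≤ X) :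
    inhomHeight (szvc x) ≤ X := by
  have h1 : inhomHeight (szvc x) ≤ Finset.univ.sup fun i => ((Fin.cons 1 x : Fin (N + 1) → ℤ) i).natAbs := by
    apply Nat.sInf_le
    refine ⟨Fin.cons 1 x, ⟨1, one_ne_zero, fun i => ?_⟩, ?_, rfl⟩
    · refine Fin.cases ?_ (fun j => ?_) i
      · simp
      · simp [szvc]
    · have h2 : Finset.univ.gcd (Fin.cons 1 x : Fin (N + 1) → ℤ) ∣ 1 :=
        Finset.gcd_dvd (f := (Fin.cons 1 x : Fin (N + 1) → ℤ)) (Finset.mem_univ 0)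
      rw [← Finset.normalize_gcd]
      exact normalize_eq_one.2 (isUnit_of_dvd_one h2)
  refine h1.trans (Finset.sup_le fun i _ => ?_)
  refine Fin.cases ?_ (fun j => ?_) i
  · simpa using hX
  · have := h j
    simp only [Fin.cons_succ]
    rw [Int.abs_eq_natAbs] at this
    exact_mod_cast this

/-- the bound for the Gram matrix -/
theorem szv_gram {L N : ℕ} (g : Fin N → Fin N → ℤ) (v : Fin L → Fin N → ℤ) (H K : ℕ)
    (hg : ∀ k l, |g k l| ≤ H) (hv : ∀ i, ∑ j, |v i j| ≤ K) (i j : Fin L) :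
    |∑ k, ∑ l, g k l * v i k * v j l| ≤ ((H * K ^ 2 : ℕ) : ℤ) := by
  calc |∑ k, ∑ l, g k l * v i k * v j l|
      ≤ ∑ k, ∑ l, |g k l * v i k * v j l| :=
        (Finset.abs_sum_le_sum_abs _ _).trans
          (Finset.sum_le_sum fun k _ => Finset.abs_sum_le_sum_abs _ _)
    _ ≤ ∑ k, ∑ l, H * (|v i k| * |v j l|) := by
        refine Finset.sum_le_sum fun k _ => Finset.sum_le_sum fun l _ => ?_
        rw [abs_mul, abs_mul, mul_assoc]
        exact mul_le_mul_of_nonneg_right (hg k l) (by positivity)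
    _ = H * ((∑ k, |v i k|) * (∑ l, |v j l|)) := by
        rw [Finset.sum_mul_sum, Finset.mul_sum]
        exact Finset.sum_congr rfl fun k _ => by rw [Finset.mul_sum]
    _ ≤ H * (K * K) := by
        gcongr
        · exact hv i
        · exact hv j
    _ = _ := by push_cast; ring

theorem szv_polys {N J L M : ℕ} (k : Fin J → ℕ)
    (P : (i : Fin J) → Fin (k i) → MvPolynomial (Fin N) ℚ)
    (hM : M = (∑ i, Finset.univ.sup fun j => (P i j).totalDegree))
    (v : Fin L → Fin N → ℤ) (z : Fin L → ℚ)
    (hz : ¬ ∃ i, ∀ j, MvPolynomial.eval (∑ i, z i • szvc (v i)) (P i j) = 0) :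
    ∃ Q : MvPolynomial (Fin L) ℚ, Q.totalDegree ≤ M ∧ MvPolynomial.eval z Q ≠ 0 ∧
      ∀ w, MvPolynomial.eval w Q ≠ 0 →
        ¬ ∃ i, ∀ j, MvPolynomial.eval (∑ i, w i • szvc (v i)) (P i j) = 0 := by
  push Not at hz
  choose j hj using hz
  set Φ : Fin N → MvPolynomial (Fin L) ℚ := fun a =>
    ∑ i, MvPolynomial.C (v i a : ℚ) * MvPolynomial.X i with hΦ
  have hΦd : ∀ a, (Φ a).totalDegree ≤ 1 := by
    intro a
    apply MvPolynomial.totalDegree_finsetSum_le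
    intro i _
    refine (MvPolynomial.totalDegree_mul _ _).trans ?_
    rw [MvPolynomial.totalDegree_C, MvPolynomial.totalDegree_X]
  have hev : ∀ w (p : MvPolynomial (Fin N) ℚ), MvPolynomial.eval w (MvPolynomial.bind₁ Φ p) =
      MvPolynomial.eval (∑ i, w i • szvc (v i)) p := by
    intro w p
    rw [← MvPolynomial.aeval_eq_eval, ← MvPolynomial.aeval_eq_eval]
    rw [MvPolynomial.aeval_bind₁]
    congr 2
    funext a
    simp [hΦ, szvc, mul_comm]
  refine ⟨MvPolynomial.bind₁ Φ (∏ i, P i (j i)), ?_, ?_, ?_⟩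
  · refine (szv_bind_deg _ Φ 1 hΦd).trans ?_
    rw [one_mul, hM]
    refine (MvPolynomial.totalDegree_finsetProd _ _).trans ?_
    exact Finset.sum_le_sum fun i _ =>
      Finset.le_sup (f := fun j => (P i j).totalDegree) (Finset.mem_univ (j i))
  · rw [hev, map_prod]
    exact Finset.prod_ne_zero_iff.2 fun i _ => hj i
  · intro w hw
    rw [hev, map_prod] at hw
    rintro ⟨i, hi⟩
    exact Finset.prod_ne_zero_iff.1 hw i (Finset.mem_univ _) (hi _)

theorem szv_gram_eq {L N : ℕ} (f : Fin N → Fin N → ℚ) (g : Fin N → Fin N → ℤ) (κ : ℚ)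
    (hg : ∀ k l, (g k l : ℚ) = κ * f k l) (v : Fin L → Fin N → ℤ)
    (A : Matrix (Fin L) (Fin L) ℤ) (hA : ∀ i j, A i j = ∑ k, ∑ l, g k l * v i k * v j l)
    (c d : Fin L → ℚ) :
    szvB (A.map (Int.cast : ℤ → ℚ)) c d =
      κ * ∑ i, ∑ j, f i j * (∑ a, c a • szvc (v a)) i * (∑ a, d a • szvc (v a)) j := by
  set vM : Matrix (Fin L) (Fin N) ℚ := Matrix.of fun i j => (v i j : ℚ) with hvM
  have hT : ∀ c : Fin L → ℚ, (∑ a, c a • szvc (v a)) = Matrix.vecMul c vM := by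
    intro c
    funext j
    simp [Matrix.vecMul, dotProduct, hvM, szvc]
  have h1 : A.map (Int.cast : ℤ → ℚ) = vM * (κ • Matrix.of f) * vM.transpose := by
    ext i j
    simp only [Matrix.map_apply, hA, Matrix.mul_apply, Matrix.transpose_apply, hvM,
      Matrix.smul_apply, Matrix.of_apply, smul_eq_mul, ← hg, Finset.sum_mul]
    push_cast
    rw [Finset.sum_comm]
    exact Finset.sum_congr rfl fun k _ => Finset.sum_congr rfl fun l _ => by ring
  rw [szvB_eq, h1, hT, hT, ← Matrix.mulVec_mulVec, ← Matrix.mulVec_mulVec,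
    Matrix.dotProduct_mulVec, Matrix.mulVec_transpose, Matrix.smul_mulVec, dotProduct_smul,
    ← szvB_eq, smul_eq_mul]
  rfl

/-- **Small-height zeros of a quadratic form outside of a union of varieties (CFH).** Given a
union `𝒵` of `J` affine varieties in `ℚ^N` of total complexity `M`, and an `L`-dimensional
quadratic space `(V,F)` over ℚ with Witt index `ω` and radical dimension `λ` whose isotropic set
`Z(V,F)` is not contained in `𝒵`, there exist `m = ω + λ` linearly independent points of
`Z(V,F) \ 𝒵` of nondecreasing inhomogeneous heights, all bounded by
`C(L,M) · H(F)^((9L+11)/2) · H(V)^(9L+12)`. -/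
theorem small_zeros_outside_varieties (L M : ℕ) :
    ∃ C : ℝ, 0 < C ∧
      ∀ (N J : ℕ), 2 ≤ N → 1 ≤ J →
      ∀ (k : Fin J → ℕ), (∀ i, 1 ≤ k i) →
      ∀ (P : (i : Fin J) → Fin (k i) → MvPolynomial (Fin N) ℚ),
      (∀ i j, 1 ≤ (P i j).totalDegree) →
      M = (∑ i, Finset.univ.sup fun j => (P i j).totalDegree) →
      ∀ (f : Fin N → Fin N → ℚ), (∀ i j, f i j = f j i) → f ≠ 0 →
      ∀ V : Submodule ℚ (Fin N → ℚ), 1 ≤ L → L ≤ N → Module.finrank ℚ V = L →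
      ∀ (ω lam : ℕ), Module.finrank ℚ (quadRadical N f V) = lam →
      (∃ W, IsTotallyIsotropic N f V W ∧ Module.finrank ℚ W = ω + lam) →
      (∀ W, IsTotallyIsotropic N f V W → Module.finrank ℚ W ≤ ω + lam) →
      (∃ z : Fin N → ℚ, z ∈ V ∧ z ≠ 0 ∧ (∑ i, ∑ j, f i j * z i * z j = 0) ∧
        ¬ ∃ i, ∀ j, MvPolynomial.eval z (P i j) = 0) →
      ∃ x : Fin (ω + lam) → (Fin N → ℚ),
        LinearIndependent ℚ x ∧
        (∀ n, x n ∈ V) ∧ (∀ n, x n ≠ 0) ∧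
        (∀ n, ∑ i, ∑ j, f i j * x n i * x n j = 0) ∧
        (∀ n, ¬ ∃ i, ∀ j, MvPolynomial.eval (x n) (P i j) = 0) ∧
        (∀ n n' : Fin (ω + lam), n ≤ n' → inhomHeight (x n) ≤ inhomHeight (x n')) ∧
        (∀ n, ((inhomHeight (x n) : ℕ) : ℝ) ≤
          C * ((projHeight fun p : Fin N × Fin N => f p.1 p.2 : ℕ) : ℝ) ^
              ((9 * (L : ℝ) + 11) / 2) * subHeight N L V ^ (9 * L + 12)) := by
  obtain ⟨C0, hcore⟩ := szv_core L M
  refine ⟨(L * C0 + 1 : ℕ), by positivity, ?_⟩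
  intro N J _ _ k _ P _ hM f hf hf0 V hL _ hV ω lam _ hWex hWmax hzex
  obtain ⟨v, K, hli, hsp, hK1, hvK, hKV⟩ := szv_lattice hL V hV
  have hf0' : (fun p : Fin N × Fin N => f p.1 p.2) ≠ 0 := by
    intro h
    apply hf0
    funext i j
    exact congrFun h (i, j)
  obtain ⟨y, κ, hκ, hyκ, hyb, hH1⟩ := szv_ph (fun p : Fin N × Fin N => f p.1 p.2) hf0'
  set H := projHeight fun p : Fin N × Fin N => f p.1 p.2 with hH
  set g : Fin N → Fin N → ℤ := fun a b => y (a, b) with hg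
  have hgκ : ∀ a b, (g a b : ℚ) = κ * f a b := fun a b => hyκ (a, b)
  have hgs : ∀ a b, g a b = g b a := by
    intro a b
    have h1 : (g a b : ℚ) = g b a := by rw [hgκ, hgκ, hf]
    exact_mod_cast h1
  set A : Matrix (Fin L) (Fin L) ℤ := fun i j => ∑ k, ∑ l, g k l * v i k * v j l with hA
  have hAs : ∀ i j, A i j = A j i := by
    intro i j
    simp only [hA]
    rw [Finset.sum_comm]
    exact Finset.sum_congr rfl fun a _ => Finset.sum_congr rfl fun b _ => by rw [hgs]; ring
  have hAb : ∀ i j, |A i j| ≤ ((H * K ^ 2 : ℕ) : ℤ) :=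
    szv_gram g v H K (fun a b => hyb (a, b)) hvK
  have hG1 : 1 ≤ H * K ^ 2 := Nat.one_le_iff_ne_zero.mpr (by positivity)
  set T := Fintype.linearCombination ℚ (fun i => szvc (v i)) with hT
  have hTa : ∀ c, T c = ∑ a, c a • szvc (v a) := fun c => rfl
  have hTi : Function.Injective T := hli.fintypeLinearCombination_injective
  have hTr : LinearMap.range T = V := by rw [hT, Fintype.range_linearCombination, hsp]
  have hTV : ∀ c, T c ∈ V := fun c => hTr ▸ LinearMap.mem_range_self T c
  have hB : ∀ c d, szvB (A.map (Int.cast : ℤ → ℚ)) c d = κ * ∑ i, ∑ j, f i j * T c i * T d j :=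
    fun c d => szv_gram_eq f g κ hgκ v A (fun _ _ => rfl) c d
  obtain ⟨z, hzV, _, hzF, hzP⟩ := hzex
  rw [← hTr] at hzV
  obtain ⟨z', rfl⟩ := hzV
  obtain ⟨Q, hQd, hQz, hQ⟩ := szv_polys k P hM v z' hzP
  obtain ⟨W, ⟨hWV, hWi⟩, hWr⟩ := hWex
  have hWc : Module.finrank ℚ (W.comap T) = ω + lam := by
    have h1 : (W.comap T).map T = W := by
      rw [Submodule.map_comap_eq, hTr]; exact inf_eq_right.2 hWV
    rw [← hWr, (Submodule.equivMapOfInjective T hTi (W.comap T)).finrank_eq, h1]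
  obtain ⟨x, hx1, hx2, hx3, hx4⟩ := hcore A hAs (H * K ^ 2) hG1 hAb Q hQd (ω + lam) z'
    (by rw [hB, hzF, mul_zero]) hQz (W.comap T) hWc
    (fun c hc d hd => by rw [hB, hWi _ hc _ hd, mul_zero])
    (fun U hU => by
      rw [(Submodule.equivMapOfInjective T hTi U).finrank_eq]
      apply hWmax
      refine ⟨?_, ?_⟩
      · rw [← hTr]; exact LinearMap.map_le_range
      · rintro _ ⟨c, hc, rfl⟩ _ ⟨d, hd, rfl⟩
        have h1 := hU c hc d hd
        rw [hB] at h1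
        exact (mul_eq_zero.1 h1).resolve_left hκ)
  set X : Fin (ω + lam) → Fin N → ℤ := fun n j => ∑ i, x n i * v i j with hX
  have hXT : ∀ n, szvc (X n) = T (szvc (x n)) := by
    intro n
    rw [hTa]
    funext j
    simp [szvc, hX]
  have hXb : ∀ n, inhomHeight (szvc (X n)) ≤
      (L * C0 + 1) * (H ^ (L + 2) * K ^ (2 * L + 5)) := by
    intro n
    have hp : 1 ≤ H ^ (L + 2) * K ^ (2 * L + 5) := Nat.one_le_iff_ne_zero.mpr (by positivity)
    apply szv_ih
    · exact le_trans hp (Nat.le_mul_of_pos_left _ (Nat.succ_pos _))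
    · intro j
      have hvj : ∀ i, |v i j| ≤ K := fun i =>
        (Finset.single_le_sum (f := fun j => |v i j|) (fun j _ => abs_nonneg _)
          (Finset.mem_univ j)).trans (hvK i)
      have h1 : |X n j| ≤ (L : ℤ) * (((C0 * (H * K ^ 2) ^ (L + 2) : ℕ) : ℤ) * K) := by
        apply szv_abs_sum_le _ _ _ (by positivity) (by simp)
        intro i
        rw [abs_mul]
        exact mul_le_mul (hx4 n i) (hvj i) (abs_nonneg _) (by positivity)
      refine h1.trans ?_
      have h2 : (L : ℤ) * (((C0 * (H * K ^ 2) ^ (L + 2) : ℕ) : ℤ) * K) =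
          ((L * C0 * (H ^ (L + 2) * K ^ (2 * L + 5)) : ℕ) : ℤ) := by
        push_cast
        have h3 : (K : ℤ) ^ (2 * L + 5) = (K ^ 2) ^ (L + 2) * K := by
          rw [← pow_mul, ← pow_succ]; congr 1
        rw [h3, mul_pow]; ring
      rw [h2]
      exact_mod_cast Nat.mul_le_mul_right _ (Nat.le_succ _)
  have hliT : LinearIndependent ℚ fun n => szvc (X n) := by
    have h1 : (fun n => szvc (X n)) = T ∘ fun n => szvc (x n) := funext hXT
    rw [h1]
    exact hx1.map' T (LinearMap.ker_eq_bot.2 hTi)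
  set σ := Tuple.sort fun n => inhomHeight (szvc (X n)) with hσ
  refine ⟨fun n => szvc (X (σ n)), hliT.comp σ σ.injective, fun n => ?_, fun n => ?_, fun n => ?_,
    fun n => ?_, ?_, fun n => ?_⟩
  · show szvc (X (σ n)) ∈ V
    rw [hXT]; exact hTV _
  · exact hliT.ne_zero _
  · have h1 := szvB_cast A (x (σ n)) (x (σ n))
    rw [hx2, hB, ← hXT] at h1
    exact (mul_eq_zero.1 (h1.trans (by simp))).resolve_left hκ
  · have h1 := hQ _ (hx3 (σ n))
    rw [← hTa, ← hXT] at h1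
    exact h1
  · intro n n' hn
    exact Tuple.monotone_sort (fun n => inhomHeight (szvc (X n))) hn
  · have h1 : ((inhomHeight (szvc (X (σ n))) : ℕ) : ℝ) ≤
        (((L * C0 + 1) * (H ^ (L + 2) * K ^ (2 * L + 5)) : ℕ) : ℝ) := by
      exact_mod_cast hXb (σ n)
    refine h1.trans ?_
    have hHr : (1 : ℝ) ≤ H := by exact_mod_cast hH1
    have hKr : (1 : ℝ) ≤ Real.sqrt K := Real.one_le_sqrt.2 (by exact_mod_cast hK1)
    have h2 : (H : ℝ) ^ (L + 2) ≤ (H : ℝ) ^ ((9 * (L : ℝ) + 11) / 2) := by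
      rw [← Real.rpow_natCast]
      apply Real.rpow_le_rpow_of_exponent_le hHr
      push_cast
      have : (0 : ℝ) ≤ L := by positivity
      linarith
    have h3 : (K : ℝ) ^ (2 * L + 5) ≤ subHeight N L V ^ (9 * L + 12) := by
      rw [hKV]
      calc (K : ℝ) ^ (2 * L + 5) = Real.sqrt K ^ (2 * (2 * L + 5)) := by
            rw [pow_mul, Real.sq_sqrt (by positivity)]
        _ ≤ _ := pow_le_pow_right₀ hKr (by omega)
    rw [Nat.cast_mul, Nat.cast_mul, Nat.cast_pow, Nat.cast_pow, mul_assoc]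
    gcongr
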